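/- Let N ≥ 2 and μ > 0, and let Ψ : (ℝ^d)^N → ℂ be smooth, 1-periodic in each coordinate, symmetric under permutations of the N variables, with ∫_{[0,1]^{dN}} |Ψ|² = 1, and satisfying the spectral localization bound ‖H_NΨ − (E₀(N) + μ/2)Ψ‖_{L²([0,1]^{dN})} ≤ μ/2. Then (2π)² · ∑_{i=1}^N ∑_{j=1}^N ∫_{[0,1]^{dN}} ∇_{x_j}(Q_iΨ) · conj(∇_{x_j}Ψ) dx ≤ (v(0) + μ/2)² + (N/(2(N−1)))·(μ + 3v(0) + v̂(0))·(2μ + v(0) − v̂(0)). -/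

import Mathlib

open MeasureTheory Real

noncomputable section

/-- The unit box `[0,1]^d` in `ℝ^d`. -/
def boxd (d : ℕ) : Set (Fin d → ℝ) := Set.univ.pi fun _ => Set.Icc (0 : ℝ) 1

/-- The unit box `[0,1]^{dN}` in `(ℝ^d)^N`. -/
def boxN (d N : ℕ) : Set (Fin N → Fin d → ℝ) :=
  Set.univ.pi fun _ => Set.univ.pi fun _ => Set.Icc (0 : ℝ) 1

/-- `|p|²` for the lattice point `p = 2πk ∈ (2πℤ)^d`. -/
def pSq (d : ℕ) (k : Fin d → ℤ) : ℝ := ∑ j, (2 * π * (k j : ℝ)) ^ 2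

/-- `v` is 1-periodic in each coordinate. -/
def PeriodicPot (d : ℕ) (v : (Fin d → ℝ) → ℝ) : Prop :=
  ∀ (x : Fin d → ℝ) (k : Fin d → ℤ), v (fun j => x j + (k j : ℝ)) = v x

/-- `vhat` gives the Fourier coefficients of `v`:
`v̂(p) = ∫_{[0,1]^d} v(x) e^{-ip·x} dx` for `p = 2πk`. -/
def HasFourierCoeffs (d : ℕ) (v : (Fin d → ℝ) → ℝ) (vhat : (Fin d → ℤ) → ℝ) : Prop :=
  ∀ k : Fin d → ℤ, (vhat k : ℂ) =
    ∫ x in boxd d, (v x : ℂ) * Complex.exp (-Complex.I * ∑ j, (2 * π * (k j : ℝ)) * x j)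

/-- `v` equals its Fourier series pointwise. -/
def HasFourierExpansion (d : ℕ) (v : (Fin d → ℝ) → ℝ) (vhat : (Fin d → ℤ) → ℝ) : Prop :=
  ∀ x : Fin d → ℝ, (v x : ℂ) =
    ∑' k : Fin d → ℤ, (vhat k : ℂ) * Complex.exp (Complex.I * ∑ j, (2 * π * (k j : ℝ)) * x j)

/-- The standing assumptions on the interaction potential `v` with Fourier
coefficients `vhat`: continuous, periodic, even, with nonnegative summable
Fourier coefficients, equal to its Fourier series. -/
structure PotentialAssumptions (d : ℕ) (v : (Fin d → ℝ) → ℝ)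
    (vhat : (Fin d → ℤ) → ℝ) : Prop where
  continuous : Continuous v
  periodic : PeriodicPot d v
  even : ∀ x, v (-x) = v x
  coeffs : HasFourierCoeffs d v vhat
  nonneg : ∀ k, 0 ≤ vhat k
  summable : Summable vhat
  expansion : HasFourierExpansion d v vhat

/-- An `N`-particle wave function is 1-periodic in each coordinate. -/
def PeriodicWF (d N : ℕ) (Ψ : (Fin N → Fin d → ℝ) → ℂ) : Prop :=
  ∀ (x : Fin N → Fin d → ℝ) (k : Fin N → Fin d → ℤ),
    Ψ (fun i j => x i j + (k i j : ℝ)) = Ψ x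

/-- An `N`-particle wave function is symmetric under permutation of the particles. -/
def SymmetricWF (d N : ℕ) (Ψ : (Fin N → Fin d → ℝ) → ℂ) : Prop :=
  ∀ (σ : Equiv.Perm (Fin N)) (x : Fin N → Fin d → ℝ), Ψ (fun i => x (σ i)) = Ψ x

/-- `∫_{[0,1]^{dN}} |Ψ|² = 1`. -/
def Normalized (d N : ℕ) (Ψ : (Fin N → Fin d → ℝ) → ℂ) : Prop :=
  ∫ x in boxN d N, ‖Ψ x‖ ^ 2 = 1

/-- The unit vector in the direction of the `j`-th coordinate of the `i`-th particle. -/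
def dir (d N : ℕ) (i : Fin N) (j : Fin d) : Fin N → Fin d → ℝ :=
  Pi.single i (Pi.single j 1)

/-- The kinetic energy `∑_{i=1}^N ∫_{[0,1]^{dN}} |∇_{x_i}Ψ|² dx`. -/
def kineticEnergy (d N : ℕ) (Ψ : (Fin N → Fin d → ℝ) → ℂ) : ℝ :=
  ∑ i : Fin N, ∫ x in boxN d N, ∑ j : Fin d, ‖fderiv ℝ Ψ x (dir d N i j)‖ ^ 2

/-- The potential energy `(N-1)⁻¹ ∑_{i<j} ∫_{[0,1]^{dN}} v(x_i - x_j)|Ψ|² dx`. -/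
def potentialEnergy (d N : ℕ) (v : (Fin d → ℝ) → ℝ) (Ψ : (Fin N → Fin d → ℝ) → ℂ) : ℝ :=
  ((N : ℝ) - 1)⁻¹ * ∑ i : Fin N, ∑ j : Fin N,
    if i < j then ∫ x in boxN d N, v (x i - x j) * ‖Ψ x‖ ^ 2 else 0

/-- The energy form `E_N(Ψ)`. -/
def energyForm (d N : ℕ) (v : (Fin d → ℝ) → ℝ) (Ψ : (Fin N → Fin d → ℝ) → ℂ) : ℝ :=
  kineticEnergy d N Ψ + potentialEnergy d N v Ψ

/-- The ground state energy `E₀(N)`: the infimum of the energy form over smooth,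
periodic, permutation-symmetric, normalized wave functions. -/
def E0 (d N : ℕ) (v : (Fin d → ℝ) → ℝ) : ℝ :=
  sInf {E : ℝ | ∃ Ψ : (Fin N → Fin d → ℝ) → ℂ, ContDiff ℝ (⊤ : ℕ∞) Ψ ∧ PeriodicWF d N Ψ ∧
    SymmetricWF d N Ψ ∧ Normalized d N Ψ ∧ E = energyForm d N v Ψ}

/-- The elementary excitation energy `e_p = √(|p|⁴ + 2|p|²v̂(p))` for `p = 2πk`. -/
def excitation (d : ℕ) (vhat : (Fin d → ℤ) → ℝ) (k : Fin d → ℤ) : ℝ :=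
  Real.sqrt ((pSq d k) ^ 2 + 2 * pSq d k * vhat k)

/-- The Bogoliubov energy `E^Bog = -(1/2)∑_{p≠0}(|p|² + v̂(p) - e_p)`. -/
def Ebog (d : ℕ) (vhat : (Fin d → ℤ) → ℝ) : ℝ :=
  -(1 / 2) * ∑' k : {k : Fin d → ℤ // k ≠ 0},
    (pSq d k.1 + vhat k.1 - excitation d vhat k.1)

/-- `Q_iΨ`: the wave function minus its average over the `i`-th variable. -/
def Qproj (d N : ℕ) (i : Fin N) (Ψ : (Fin N → Fin d → ℝ) → ℂ) :
    (Fin N → Fin d → ℝ) → ℂ :=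
  fun x => Ψ x - ∫ y in boxd d, Ψ (Function.update x i y)

/-- The Hamiltonian `H_N` acting pointwise on smooth wave functions:
`(H_NΨ)(x) = -∑_j Δ_{x_j}Ψ(x) + (N-1)⁻¹∑_{i<j} v(x_i-x_j)Ψ(x)`. -/
def HamOp (d N : ℕ) (v : (Fin d → ℝ) → ℝ) (Ψ : (Fin N → Fin d → ℝ) → ℂ) :
    (Fin N → Fin d → ℝ) → ℂ :=
  fun x =>
    -(∑ i : Fin N, ∑ j : Fin d,
        fderiv ℝ (fun y => fderiv ℝ Ψ y (dir d N i j)) x (dir d N i j)) +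
    (((N : ℝ) - 1)⁻¹ : ℝ) * ∑ i : Fin N, ∑ j : Fin N,
      if i < j then (v (x i - x j) : ℂ) * Ψ x else 0

/-!
Write `Pᵢ` for the average over the `i`-th variable, `Qᵢ = 1 - Pᵢ`, `N₊ = ∑ᵢ Qᵢ`, `T` for the
kinetic operator and `W` for the interaction, so that the left-hand side is
`(2π)² Re ⟪N₊Ψ, TΨ⟫`. The Poincaré inequality gives `(2π)² ∑ᵢ ‖QᵢΨ‖² ≤ Re ⟪Ψ, TΨ⟫` and
`(2π)² ‖N₊Ψ‖² ≤ Re ⟪N₊Ψ, TΨ⟫`. Since `v` is positive definite, `W` is pointwise at least its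
mean-field value `K = N (N v̂(0) - v(0)) / (2 (N - 1))`, while the constant trial function gives
`E₀ ≤ N v̂(0) / 2`; testing the localization bound with `Ψ` therefore controls `∑ᵢ ‖QᵢΨ‖²` by
`μ` and `E₀ - K`.

Testing with `N₊Ψ` instead produces `∑ᵢ ⟪QᵢΨ, WΨ⟫`, in which `N₊` does not commute with `W`. The
part `⟪QᵢΨ, W QᵢΨ⟫` is again at least `K ‖QᵢΨ‖²`. In `⟪QᵢΨ, W PᵢΨ⟫` only the pairs containing `i`
contribute, and for the pair `{i, j}` the identity `Pⱼ + Qⱼ = 1` leaves three terms: the one from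
`PᵢPⱼΨ` to `QᵢPⱼΨ` vanishes, the exchange term from `PᵢQⱼΨ` to `QᵢPⱼΨ` is nonnegative because
`v̂ ≥ 0`, and the one ending in `QᵢQⱼΨ` is at least `-v(0) ‖QᵢQⱼΨ‖ ‖Ψ‖`. By the Cauchy-Schwarz
inequality the terms of the last kind cost at most `v(0) ‖N₊Ψ‖` in total. Hence
`Y = Re ⟪N₊Ψ, TΨ⟫` satisfies `Y ≤ (v(0) + μ/2) ‖N₊Ψ‖ + (μ/2 + E₀ - K) ∑ᵢ ‖QᵢΨ‖²`, and
`(2π)² ‖N₊Ψ‖² ≤ Y` closes the estimate.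
-/

open scoped ComplexConjugate InnerProductSpace

section SymmetricProjection

variable {𝕜 V : Type*} [RCLike 𝕜] [SeminormedAddCommGroup V] [InnerProductSpace 𝕜 V]
  {P Q : V →ₗ[𝕜] V}

lemma isSymmetricProjection_one_sub (hP : P.IsSymmetricProjection) :
    (1 - P).IsSymmetricProjection :=
  ⟨hP.isIdempotentElem.one_sub, LinearMap.IsSymmetric.id.sub hP.isSymmetric⟩

lemma symmetricProjection_apply_apply (hP : P.IsSymmetricProjection) (x : V) : P (P x) = P x :=
  LinearMap.congr_fun hP.isIdempotentElem x

lemma inner_symmetricProjection_apply_self (hP : P.IsSymmetricProjection) (x : V) :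
    ⟪P x, x⟫_𝕜 = (‖P x‖ : 𝕜) ^ 2 := by
  rw [← inner_self_eq_norm_sq_to_K, ← hP.isSymmetric, symmetricProjection_apply_apply hP]

lemma inner_symmetricProjection_apply_of_commute (hP : P.IsSymmetricProjection)
    (hQ : Q.IsSymmetricProjection) (hPQ : Commute P Q) (x : V) :
    ⟪P x, Q x⟫_𝕜 = (‖P (Q x)‖ : 𝕜) ^ 2 := by
  rw [← inner_symmetricProjection_apply_self hP, ← Module.End.mul_apply, hPQ.eq,
    Module.End.mul_apply, hQ.isSymmetric, symmetricProjection_apply_apply hQ]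

lemma norm_symmetricProjection_apply_le (hP : P.IsSymmetricProjection) (x : V) : ‖P x‖ ≤ ‖x‖ := by
  have h : ‖P x‖ ^ 2 ≤ ‖P x‖ * ‖x‖ := by
    simpa [inner_symmetricProjection_apply_self hP] using norm_inner_le_norm (𝕜 := 𝕜) (P x) x
  nlinarith [norm_nonneg (P x), norm_nonneg x]

variable {ι : Type*} [Fintype ι] {Q : ι → V →ₗ[𝕜] V}

lemma norm_sum_symmetricProjection_apply_sq (hQ : ∀ i, (Q i).IsSymmetricProjection)
    (hcomm : ∀ i j, Commute (Q i) (Q j)) (x : V) :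
    ‖∑ i, Q i x‖ ^ 2 = ∑ i, ∑ j, ‖Q i (Q j x)‖ ^ 2 := by
  have hinner (i j) : RCLike.re ⟪Q i x, Q j x⟫_𝕜 = ‖Q i (Q j x)‖ ^ 2 := by
    rw [inner_symmetricProjection_apply_of_commute (hQ i) (hQ j) (hcomm i j)]
    norm_cast
  rw [← inner_self_eq_norm_sq (𝕜 := 𝕜)]
  simp only [sum_inner, inner_sum, map_sum, hinner]
  exact Finset.sum_comm

lemma sum_sum_erase_norm_symmetricProjection_le [DecidableEq ι]
    (hQ : ∀ i, (Q i).IsSymmetricProjection)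
    (hcomm : ∀ i j, Commute (Q i) (Q j)) (x : V) :
    ∑ i, ∑ j ∈ Finset.univ.erase i, ‖Q i (Q j x)‖ ≤
      (Fintype.card ι - 1 : ℕ) * ‖∑ i, Q i x‖ := by
  set n := Fintype.card ι with hn
  have hcard (i : ι) : ((Finset.univ.erase i).card : ℝ) = (n - 1 : ℕ) := by
    rw [Finset.card_erase_of_mem (Finset.mem_univ i), Finset.card_univ]
  have hpair (i : ι) :
      ∑ j ∈ Finset.univ.erase i, ‖Q i (Q j x)‖ ^ 2 ≤ (n - 1 : ℕ) * ‖Q i x‖ ^ 2 := by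
    rw [← hcard i, ← nsmul_eq_mul]
    refine Finset.sum_le_card_nsmul _ _ _ fun j _ => ?_
    rw [← Module.End.mul_apply, (hcomm i j).eq]
    gcongr
    exact norm_symmetricProjection_apply_le (hQ j) _
  have hsq : (∑ i, ∑ j ∈ Finset.univ.erase i, ‖Q i (Q j x)‖) ^ 2 ≤
      n * ∑ i, (n - 1 : ℕ) * ∑ j ∈ Finset.univ.erase i, ‖Q i (Q j x)‖ ^ 2 := by
    refine sq_sum_le_card_mul_sum_sq.trans ?_
    rw [Finset.card_univ, ← hn]
    gcongr with i
    rw [← hcard i]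
    exact sq_sum_le_card_mul_sum_sq
  refine le_of_sq_le_sq (hsq.trans ?_) (by positivity)
  rw [mul_pow, norm_sum_symmetricProjection_apply_sq hQ hcomm, Finset.mul_sum, Finset.mul_sum]
  refine Finset.sum_le_sum fun i _ => ?_
  have hpos : 0 < n := Fintype.card_pos_iff.2 ⟨i⟩
  have hn1 : (n : ℝ) = (n - 1 : ℕ) + 1 := by rw [Nat.cast_pred hpos, sub_add_cancel]
  rw [hn1, ← Finset.add_sum_erase _ _ (Finset.mem_univ i), symmetricProjection_apply_apply (hQ i)]
  nlinarith [mul_le_mul_of_nonneg_left (hpair i) (Nat.cast_nonneg (α := ℝ) (n - 1))]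

end SymmetricProjection

section Cube

variable {ι E : Type*} [NormedAddCommGroup E]

/-- A function on `ℝ^ι` that is 1-periodic in each coordinate. -/
def LatticePeriodic {F : Type*} (h : (ι → ℝ) → F) : Prop :=
  ∀ (x : ι → ℝ) (k : ι → ℤ), h (fun l => x l + (k l : ℝ)) = h x

/-- The representative in `(0,1]^ι` of a point of the torus `(ℝ/ℤ)^ι`. -/
def torusRep (t : UnitAddTorus ι) : ι → ℝ :=
  UnitAddTorus.measurableEquivPiIoc 0 t

lemma torusRep_mem_Icc (t : UnitAddTorus ι) (l : ι) : torusRep t l ∈ Set.Icc (0 : ℝ) 1 := by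
  simpa [torusRep] using Set.Ioc_subset_Icc_self ((UnitAddTorus.measurableEquivPiIoc 0 t).2 l)

lemma coe_torusRep (t : UnitAddTorus ι) : (fun l => (torusRep t l : UnitAddCircle)) = t :=
  (UnitAddTorus.measurableEquivPiIoc 0).symm_apply_apply t

lemma measurableEmbedding_torusRep [Countable ι] : MeasurableEmbedding (torusRep (ι := ι)) :=
  (MeasurableEmbedding.subtype_coe (MeasurableSet.univ_pi' fun _ => measurableSet_Ioc)).comp
    (UnitAddTorus.measurableEquivPiIoc 0).measurableEmbedding

lemma LatticePeriodic.torusRep_coe {F : Type*} {h : (ι → ℝ) → F} (hh : LatticePeriodic h)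
    (x : ι → ℝ) : h (torusRep fun l => (x l : UnitAddCircle)) = h x := by
  rw [← hh x fun l => -toIocDiv one_pos 0 (x l)]
  congr 1
  ext l
  simp [torusRep, AddCircle.equivIoc, QuotientAddGroup.equivIocMod_coe, toIocMod, sub_eq_add_neg]

attribute [local instance] instMeasureSpaceUnitAddCircle

lemma isAddHaarMeasure_unitAddCircle :
    Measure.IsAddHaarMeasure (volume : Measure UnitAddCircle) :=
  inferInstanceAs (Measure.IsAddHaarMeasure AddCircle.haarAddCircle)

lemma isProbabilityMeasure_unitAddCircle :
    IsProbabilityMeasure (volume : Measure UnitAddCircle) :=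
  inferInstanceAs (IsProbabilityMeasure AddCircle.haarAddCircle)

attribute [local instance] isAddHaarMeasure_unitAddCircle isProbabilityMeasure_unitAddCircle

variable [Fintype ι]

lemma setOf_mem_Ioc_ae_eq_pi_Icc :
    {x : ι → ℝ | ∀ l, x l ∈ Set.Ioc (0 : ℝ) (0 + 1)} =ᵐ[volume]
      Set.univ.pi fun _ => Set.Icc (0 : ℝ) 1 := by
  have : {x : ι → ℝ | ∀ l, x l ∈ Set.Ioc (0 : ℝ) (0 + 1)} =
      Set.univ.pi fun _ => Set.Ioc (0 : ℝ) 1 := by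
    ext x; simp
  rw [this, Set.pi_univ_Icc]
  exact Measure.univ_pi_Ioc_ae_eq_Icc

lemma measurePreserving_torusRep :
    MeasurePreserving (torusRep (ι := ι)) volume
      (volume.restrict (Set.univ.pi fun _ => Set.Icc (0 : ℝ) 1)) := by
  rw [← Measure.restrict_congr_set setOf_mem_Ioc_ae_eq_pi_Icc]
  exact (measurePreserving_subtype_coe (MeasurableSet.univ_pi' fun _ => measurableSet_Ioc)).comp
    (UnitAddTorus.measurePreserving_equivPiIoc 0)

lemma LatticePeriodic.setIntegral_cube_add_const [NormedSpace ℝ E] {h : (ι → ℝ) → E}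
    (hh : LatticePeriodic h) (c : ι → ℝ) :
    ∫ x in Set.univ.pi fun _ => Set.Icc (0 : ℝ) 1, h (x + c) =
      ∫ x in Set.univ.pi fun _ => Set.Icc (0 : ℝ) 1, h x := by
  simp only [← measurePreserving_torusRep.integral_comp measurableEmbedding_torusRep]
  rw [← integral_add_right_eq_self (fun t => h (torusRep t))
      (fun l => (c l : UnitAddCircle) : UnitAddTorus ι)]
  congr 1
  ext t
  rw [← hh.torusRep_coe]
  simp only [Pi.add_apply, AddCircle.coe_add, Pi.add_def, congrFun (coe_torusRep t)]

end Cube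

section Box

variable {d N : ℕ} {E : Type*} [NormedAddCommGroup E]

lemma isCompact_boxd (d : ℕ) : IsCompact (boxd d) :=
  isCompact_univ_pi fun _ => isCompact_Icc

lemma isCompact_boxN (d N : ℕ) : IsCompact (boxN d N) :=
  isCompact_univ_pi fun _ => isCompact_boxd d

lemma restrict_boxd (d : ℕ) :
    (volume : Measure (Fin d → ℝ)).restrict (boxd d) =
      Measure.pi fun _ => (volume : Measure ℝ).restrict (Set.Icc 0 1) :=
  Measure.restrict_pi_pi _ _

lemma restrict_boxN (d N : ℕ) :
    (volume : Measure (Fin N → Fin d → ℝ)).restrict (boxN d N) =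
      Measure.pi fun _ => (volume : Measure (Fin d → ℝ)).restrict (boxd d) :=
  Measure.restrict_pi_pi _ _

instance isProbabilityMeasure_restrict_Icc :
    IsProbabilityMeasure ((volume : Measure ℝ).restrict (Set.Icc 0 1)) :=
  ⟨by simp⟩

instance isProbabilityMeasure_restrict_boxd (d : ℕ) :
    IsProbabilityMeasure ((volume : Measure (Fin d → ℝ)).restrict (boxd d)) := by
  rw [restrict_boxd]; infer_instance

instance isProbabilityMeasure_restrict_boxN (d N : ℕ) :
    IsProbabilityMeasure ((volume : Measure (Fin N → Fin d → ℝ)).restrict (boxN d N)) := by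
  rw [restrict_boxN]; infer_instance

lemma integrable_boxd {f : (Fin d → ℝ) → E} (hf : Continuous f) :
    Integrable f (volume.restrict (boxd d)) :=
  hf.continuousOn.integrableOn_compact (isCompact_boxd d)

lemma integrable_boxN {f : (Fin N → Fin d → ℝ) → E} (hf : Continuous f) :
    Integrable f (volume.restrict (boxN d N)) :=
  hf.continuousOn.integrableOn_compact (isCompact_boxN d N)

lemma measurePreserving_curry (d N : ℕ) :
    MeasurePreserving (MeasurableEquiv.curry (Fin N) (Fin d) ℝ)
      (volume.restrict (Set.univ.pi fun _ => Set.Icc (0 : ℝ) 1)) (volume.restrict (boxN d N)) := by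
  refine ⟨MeasurableEquiv.measurable _, ?_⟩
  rw [restrict_boxN, restrict_boxd, volume_pi, Measure.restrict_pi_pi]
  simpa only [Measure.infinitePi_eq_pi] using Measure.infinitePi_map_curry
    fun (_ : Fin N) (_ : Fin d) => (volume : Measure ℝ).restrict (Set.Icc 0 1)

variable [NormedSpace ℝ E]

lemma PeriodicWF.setIntegral_add_const {f : (Fin N → Fin d → ℝ) → ℂ} (hf : PeriodicWF d N f)
    (c : Fin N → Fin d → ℝ) : ∫ x in boxN d N, f (x + c) = ∫ x in boxN d N, f x := by
  simp only [← (measurePreserving_curry d N).integral_comp (MeasurableEquiv.measurableEmbedding _)]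
  have hp : LatticePeriodic fun x => f (MeasurableEquiv.curry (Fin N) (Fin d) ℝ x) :=
    fun x k => hf _ (Function.curry k)
  exact hp.setIntegral_cube_add_const (Function.uncurry c)

lemma continuous_integral_boxd {Y : Type*} [TopologicalSpace Y] [FirstCountableTopology Y]
    [LocallyCompactSpace Y] {f : Y → (Fin d → ℝ) → E} (hf : Continuous f.uncurry) :
    Continuous fun x => ∫ y in boxd d, f x y :=
  continuous_parametric_integral_of_continuous hf (isCompact_boxd d)

lemma integral_integral_boxd_swap {f : (Fin d → ℝ) → (Fin d → ℝ) → E}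
    (hf : Continuous f.uncurry) :
    ∫ x in boxd d, ∫ y in boxd d, f x y = ∫ y in boxd d, ∫ x in boxd d, f x y := by
  apply integral_integral_swap
  rw [Measure.prod_restrict]
  exact hf.continuousOn.integrableOn_compact ((isCompact_boxd d).prod (isCompact_boxd d))

lemma continuous_update_uncurry (i : Fin N) :
    Continuous fun p : (Fin N → Fin d → ℝ) × (Fin d → ℝ) => Function.update p.1 i p.2 :=
  continuous_fst.update i continuous_snd

lemma integral_boxN_insertNth {n : ℕ} (i : Fin (n + 1)) {f : (Fin (n + 1) → Fin d → ℝ) → E}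
    (hf : Continuous f) :
    ∫ x in boxN d (n + 1), f x =
      ∫ r in boxN d n, ∫ a in boxd d, f (i.insertNth (α := fun _ => Fin d → ℝ) a r) := by
  have hm := (measurePreserving_piFinSuccAbove
    (fun _ : Fin (n + 1) => (volume : Measure (Fin d → ℝ)).restrict (boxd d)) i).symm
  rw [restrict_boxN, ← hm.integral_comp (MeasurableEquiv.measurableEmbedding _) f,
    ← restrict_boxN, integral_prod_symm]
  · rfl
  · rw [Measure.prod_restrict]
    exact (hf.comp (Continuous.finInsertNth (A := fun _ => Fin d → ℝ) i continuous_fst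
      continuous_snd)).continuousOn.integrableOn_compact
        ((isCompact_boxd d).prod (isCompact_boxN d n))

lemma integral_boxN_integral_boxd_update {i : Fin N}
    {G : (Fin N → Fin d → ℝ) → (Fin d → ℝ) → E} (hG : Continuous G.uncurry) :
    ∫ x in boxN d N, ∫ y in boxd d, G (Function.update x i y) (x i) =
      ∫ x in boxN d N, ∫ y in boxd d, G x y := by
  obtain _ | n := N
  · exact i.elim0
  have hswap : Continuous fun x => ∫ y in boxd d, G (Function.update x i y) (x i) :=
    continuous_integral_boxd <| hG.comp <|
      (continuous_update_uncurry i).prodMk ((continuous_apply i).comp continuous_fst)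
  rw [integral_boxN_insertNth i hswap, integral_boxN_insertNth i (continuous_integral_boxd hG)]
  congr 1
  ext r
  simp only [Fin.update_insertNth, Fin.insertNth_apply_same]
  exact (integral_integral_boxd_swap (f := fun a y => G (i.insertNth a r) y) <| hG.comp <|
    (continuous_fst.finInsertNth i continuous_const).prodMk continuous_snd).symm

end Box

section InnerProduct

variable {d N : ℕ}

/-- Continuous wave functions of `N` particles, a type synonym of `C((ℝ^d)^N, ℂ)` that carries the
`L²([0,1]^{dN})` seminorm instead of the compact-open topology. -/
def WaveFun (d N : ℕ) : Type := C(Fin N → Fin d → ℝ, ℂ)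

namespace WaveFun

instance : FunLike (WaveFun d N) (Fin N → Fin d → ℝ) ℂ :=
  inferInstanceAs (FunLike C(Fin N → Fin d → ℝ, ℂ) _ _)

instance : ContinuousMapClass (WaveFun d N) (Fin N → Fin d → ℝ) ℂ :=
  inferInstanceAs (ContinuousMapClass C(Fin N → Fin d → ℝ, ℂ) _ _)

instance : CommRing (WaveFun d N) := inferInstanceAs (CommRing C(Fin N → Fin d → ℝ, ℂ))

instance : Algebra ℂ (WaveFun d N) := inferInstanceAs (Algebra ℂ C(Fin N → Fin d → ℝ, ℂ))

instance : StarRing (WaveFun d N) := inferInstanceAs (StarRing C(Fin N → Fin d → ℝ, ℂ))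

/-- The bundled form of a continuous function. -/
def mk (f : (Fin N → Fin d → ℝ) → ℂ) (hf : Continuous f := by fun_prop) : WaveFun d N :=
  (⟨f, hf⟩ : C(Fin N → Fin d → ℝ, ℂ))

@[ext] lemma ext {f g : WaveFun d N} (h : ∀ x, f x = g x) : f = g := DFunLike.ext f g h

variable (f g : WaveFun d N) (x : Fin N → Fin d → ℝ)

@[simp] lemma mk_apply {f : (Fin N → Fin d → ℝ) → ℂ} (hf : Continuous f) : mk f hf x = f x := rfl

@[simp] lemma add_apply : (f + g) x = f x + g x := rfl

@[simp] lemma sub_apply : (f - g) x = f x - g x := rfl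

@[simp] lemma neg_apply : (-f) x = -f x := rfl

@[simp] lemma mul_apply : (f * g) x = f x * g x := rfl

@[simp] lemma one_apply : (1 : WaveFun d N) x = 1 := rfl

@[simp] lemma zero_apply : (0 : WaveFun d N) x = 0 := rfl

@[simp] lemma smul_apply (c : ℂ) : (c • f) x = c * f x := rfl

@[simp] lemma star_apply : star f x = conj (f x) := rfl

@[simp] lemma sum_apply {ι : Type*} (s : Finset ι) (f : ι → WaveFun d N) :
    (∑ i ∈ s, f i) x = ∑ i ∈ s, f i x :=
  map_sum (⟨⟨fun f : WaveFun d N => f x, rfl⟩, fun _ _ => rfl⟩ : WaveFun d N →+ ℂ) f s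

lemma integrable : Integrable f (volume.restrict (boxN d N)) := integrable_boxN (map_continuous f)

/-- The `L²([0,1]^{dN})` inner product; it is only semidefinite, since wave functions are not
required to be periodic and may differ outside the box. -/
abbrev innerCore (d N : ℕ) : PreInnerProductSpace.Core ℂ (WaveFun d N) where
  inner f g := ∫ x in boxN d N, conj (f x) * g x
  conj_inner_symm f g := by
    simp only [← integral_conj, map_mul, Complex.conj_conj, mul_comm]
  re_inner_nonneg f := by
    simp only [Complex.conj_mul', ← Complex.ofReal_pow, integral_complex_ofReal]
    exact integral_nonneg fun x => sq_nonneg ‖f x‖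
  add_left f g h := by
    simp only [add_apply, map_add, add_mul]
    exact integral_add (star f * h).integrable (star g * h).integrable
  smul_left f g c := by
    simp only [smul_apply, map_mul, mul_assoc, integral_const_mul]

instance : SeminormedAddCommGroup (WaveFun d N) :=
  letI := innerCore d N
  InnerProductSpace.Core.toSeminormedAddCommGroup (𝕜 := ℂ)

instance : InnerProductSpace ℂ (WaveFun d N) := .ofCore (innerCore d N)

lemma inner_def : ⟪f, g⟫_ℂ = ∫ x in boxN d N, conj (f x) * g x := rfl

lemma norm_sq_eq_integral : ‖f‖ ^ 2 = ∫ x in boxN d N, ‖f x‖ ^ 2 := by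
  rw [← inner_self_eq_norm_sq (𝕜 := ℂ), inner_def]
  simp only [Complex.conj_mul', ← Complex.ofReal_pow, integral_complex_ofReal,
    RCLike.re_eq_complex_re, Complex.ofReal_re]

lemma inner_mul_right_eq (w : WaveFun d N) : ⟪f, w * g⟫_ℂ = ⟪star w * f, g⟫_ℂ := by
  simp only [inner_def, mul_apply, star_apply, map_mul, Complex.conj_conj]
  congr 1 with x
  ring

variable {f}

lemma norm_mul_le {C : ℝ} {w : WaveFun d N} (hw : ∀ x, ‖w x‖ ≤ C) : ‖w * f‖ ≤ C * ‖f‖ := by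
  have hC : 0 ≤ C := (norm_nonneg _).trans (hw 0)
  refine le_of_sq_le_sq ?_ (by positivity)
  rw [mul_pow, norm_sq_eq_integral, norm_sq_eq_integral, ← integral_const_mul]
  refine integral_mono (integrable_boxN (by fun_prop)) (integrable_boxN (by fun_prop)) fun x => ?_
  simp only [mul_apply, norm_mul, mul_pow]
  gcongr
  exact hw x

lemma le_re_inner_mul {K : ℝ} {w : WaveFun d N} (hw : ∀ x, K ≤ (w x).re) :
    K * ‖f‖ ^ 2 ≤ (⟪f, w * f⟫_ℂ).re := by
  have hre : (⟪f, w * f⟫_ℂ).re = ∫ x in boxN d N, (w x).re * ‖f x‖ ^ 2 := by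
    refine (integral_re (star f * (w * f)).integrable).symm.trans ?_
    congr 1 with x
    simp only [mul_apply, star_apply, mul_left_comm, Complex.conj_mul', ← Complex.ofReal_pow,
      RCLike.re_eq_complex_re, Complex.re_mul_ofReal]
  rw [hre, norm_sq_eq_integral, ← integral_const_mul]
  refine integral_mono (integrable_boxN (by fun_prop)) (integrable_boxN (by fun_prop)) fun x => ?_
  gcongr
  exact hw x

end WaveFun

end InnerProduct

section Averaging

variable {d N : ℕ}

namespace WaveFun

/-- The orthogonal projection onto wave functions that do not depend on the position of particle
`i`: the average over that position. -/
def avg (i : Fin N) : Module.End ℂ (WaveFun d N) where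
  toFun f := mk (fun x => ∫ y in boxd d, f (Function.update x i y)) <|
    continuous_integral_boxd ((map_continuous f).comp (continuous_update_uncurry i))
  map_add' f g := by
    ext x
    simp only [mk_apply, add_apply]
    exact integral_add (integrable_boxd (by fun_prop)) (integrable_boxd (by fun_prop))
  map_smul' c f := by
    ext x
    simp only [mk_apply, smul_apply, integral_const_mul, RingHom.id_apply]

lemma avg_apply (i : Fin N) (f : WaveFun d N) (x : Fin N → Fin d → ℝ) :
    avg i f x = ∫ y in boxd d, f (Function.update x i y) := rfl

/-- `f` does not depend on the position of particle `i`. -/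
def IndependentOf (i : Fin N) (f : WaveFun d N) : Prop :=
  ∀ x y, f (Function.update x i y) = f x

lemma independentOf_avg (i : Fin N) (f : WaveFun d N) : (avg i f).IndependentOf i := fun x y => by
  simp only [avg_apply, Function.update_idem]

lemma IndependentOf.avg_mul {i : Fin N} {w : WaveFun d N} (hw : w.IndependentOf i)
    (f : WaveFun d N) : avg i (w * f) = w * avg i f := by
  ext x
  simp only [avg_apply, mul_apply, hw x, integral_const_mul]

lemma IndependentOf.avg_eq {i : Fin N} {f : WaveFun d N} (hf : f.IndependentOf i) :
    avg i f = f := by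
  ext x
  simp only [avg_apply, hf x, integral_const, probReal_univ, one_smul]

lemma IndependentOf.mul {i : Fin N} {f g : WaveFun d N} (hf : f.IndependentOf i)
    (hg : g.IndependentOf i) : (f * g).IndependentOf i := fun x y =>
  congrArg₂ (· * ·) (hf x y) (hg x y)

lemma isSymmetricProjection_avg (i : Fin N) :
    (avg i : Module.End ℂ (WaveFun d N)).IsSymmetricProjection := by
  refine ⟨LinearMap.ext fun f => (independentOf_avg i f).avg_eq, fun f g => ?_⟩
  have hG : Continuous (Function.uncurry fun (x : Fin N → Fin d → ℝ) y =>
      conj (f x) * g (Function.update x i y)) :=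
    (Complex.continuous_conj.comp ((map_continuous f).comp continuous_fst)).mul
      ((map_continuous g).comp (continuous_update_uncurry i))
  simp only [inner_def, avg_apply, ← integral_conj, ← integral_mul_const, ← integral_const_mul]
  rw [← integral_boxN_integral_boxd_update (i := i) hG]
  simp only [Function.update_idem, Function.update_eq_self]

lemma commute_avg (i j : Fin N) : Commute (avg i : Module.End ℂ (WaveFun d N)) (avg j) := by
  obtain rfl | hij := eq_or_ne i j
  · rfl
  refine LinearMap.ext fun f => WaveFun.ext fun x => ?_
  simp only [Module.End.mul_apply, avg_apply, Function.update_comm hij.symm]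
  refine integral_integral_boxd_swap
    (f := fun y z => f (Function.update (Function.update x i y) j z)) ((map_continuous f).comp ?_)
  exact (continuous_const.update (A := fun _ => Fin d → ℝ) i continuous_fst).update j continuous_snd

lemma IndependentOf.avg {j : Fin N} {f : WaveFun d N} (hf : f.IndependentOf j) (i : Fin N) :
    (avg i f).IndependentOf j := by
  rw [← hf.avg_eq, ← Module.End.mul_apply, (commute_avg i j).eq]
  exact independentOf_avg j _

/-- `Q_i`: the deviation from the average over the position of particle `i`. -/
abbrev dev (i : Fin N) : Module.End ℂ (WaveFun d N) := 1 - avg i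

lemma dev_add_avg (i : Fin N) (f : WaveFun d N) : dev i f + avg i f = f := sub_add_cancel f _

lemma isSymmetricProjection_dev (i : Fin N) :
    (dev i : Module.End ℂ (WaveFun d N)).IsSymmetricProjection :=
  isSymmetricProjection_one_sub (isSymmetricProjection_avg i)

lemma IndependentOf.inner_dev_left {i : Fin N} {g : WaveFun d N} (hg : g.IndependentOf i)
    (f : WaveFun d N) : ⟪dev i f, g⟫_ℂ = 0 := by
  rw [(isSymmetricProjection_dev i).isSymmetric, LinearMap.sub_apply, hg.avg_eq,
    Module.End.one_apply, sub_self, inner_zero_right]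

lemma commute_dev (i j : Fin N) : Commute (dev i : Module.End ℂ (WaveFun d N)) (dev j) :=
  (Commute.one_left _).sub_left ((Commute.one_right _).sub_right (commute_avg i j))

/-- The number `N₊ = ∑ Q_i` of particles outside the condensate. -/
def excitationNumber : Module.End ℂ (WaveFun d N) := ∑ i, dev i

lemma excitationNumber_apply (f : WaveFun d N) : excitationNumber f = ∑ i, dev i f :=
  LinearMap.sum_apply _ _ _

lemma inner_excitationNumber_self (f : WaveFun d N) :
    ⟪excitationNumber f, f⟫_ℂ = ((∑ i, ‖dev i f‖ ^ 2 : ℝ) : ℂ) := by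
  rw [excitationNumber_apply, sum_inner]
  push_cast
  exact Finset.sum_congr rfl fun i _ =>
    inner_symmetricProjection_apply_self (isSymmetricProjection_dev i) f

lemma norm_excitationNumber_sq (f : WaveFun d N) :
    ‖excitationNumber f‖ ^ 2 = ∑ i, ∑ j, ‖dev i (dev j f)‖ ^ 2 := by
  rw [excitationNumber_apply]
  exact norm_sum_symmetricProjection_apply_sq isSymmetricProjection_dev commute_dev f

/-- The wave function obtained by exchanging particles `i` and `j`. -/
def swap (i j : Fin N) : Module.End ℂ (WaveFun d N) where
  toFun f := mk fun x => f (x ∘ Equiv.swap i j)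
  map_add' _ _ := rfl
  map_smul' _ _ := rfl

lemma swap_apply (i j : Fin N) (f : WaveFun d N) (x : Fin N → Fin d → ℝ) :
    swap i j f x = f (x ∘ Equiv.swap i j) := rfl

lemma swap_avg (i j k : Fin N) (f : WaveFun d N) :
    swap i j (avg k f) = avg (Equiv.swap i j k) (swap i j f) := by
  ext x
  simp only [swap_apply, avg_apply, Function.update_comp_equiv, Equiv.symm_apply_apply]

lemma swap_dev (i j k : Fin N) (f : WaveFun d N) :
    swap i j (dev k f) = dev (Equiv.swap i j k) (swap i j f) := by
  simp only [LinearMap.sub_apply, Module.End.one_apply, map_sub, swap_avg]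

lemma swap_eq_self {f : WaveFun d N} (hf : SymmetricWF d N f) (i j : Fin N) : swap i j f = f :=
  WaveFun.ext (hf (Equiv.swap i j))

lemma IndependentOf.swap_eq {i j : Fin N} {f : WaveFun d N} (hi : f.IndependentOf i)
    (hj : f.IndependentOf j) : swap i j f = f := by
  ext x
  rw [swap_apply, ← hj _ (x j), ← hi _ (x i)]
  congr 1
  ext a
  obtain rfl | hai := eq_or_ne a i
  · simp
  obtain rfl | haj := eq_or_ne a j
  · simp [hai]
  · simp [hai, haj, Equiv.swap_apply_of_ne_of_ne]

lemma IndependentOf.re_inner_swap_nonneg {i j : Fin N} {f : WaveFun d N}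
    (hf : f.IndependentOf j) : 0 ≤ (⟪f, swap i j f⟫_ℂ).re := by
  have hinner : ⟪f, swap i j f⟫_ℂ = ⟪f, WaveFun.avg i f⟫_ℂ := by
    nth_rewrite 1 [← hf.avg_eq]
    have hswap : WaveFun.avg j (swap i j f) = swap i j (WaveFun.avg i f) := by
      rw [swap_avg, Equiv.swap_apply_left]
    rw [(isSymmetricProjection_avg j).isSymmetric, hswap,
      (independentOf_avg i f).swap_eq (hf.avg i)]
  rw [hinner, ← (isSymmetricProjection_avg i).isSymmetric,
    inner_symmetricProjection_apply_self (isSymmetricProjection_avg i)]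
  norm_cast
  exact sq_nonneg _

end WaveFun

end Averaging

section Derivative

lemma hasFDerivAt_setIntegral_add {X Y E : Type*} [NormedAddCommGroup X] [NormedSpace ℝ X]
    [ProperSpace X] [TopologicalSpace Y] [MeasurableSpace Y] [OpensMeasurableSpace Y]
    [T2Space Y] [NormedAddCommGroup E] [NormedSpace ℝ E] {μ : Measure Y}
    [IsFiniteMeasureOnCompacts μ] {K : Set Y} (hK : IsCompact K) {f : X → E}
    (hf : ContDiff ℝ 1 f) {φ : Y → X} (hφ : Continuous φ) (x : X) :
    HasFDerivAt (fun x => ∫ y in K, f (x + φ y) ∂μ) (∫ y in K, fderiv ℝ f (x + φ y) ∂μ) x := by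
  have hc : Continuous fun p : X × Y => fderiv ℝ f (p.1 + φ p.2) :=
    (hf.continuous_fderiv one_ne_zero).comp (by fun_prop)
  obtain ⟨C, hC⟩ := ((isCompact_closedBall x 1).prod hK).exists_bound_of_continuousOn
    hc.continuousOn
  have := isFiniteMeasure_restrict.2 (hK.measure_lt_top (μ := μ)).ne
  have hint (z : X) : IntegrableOn (fun y => f (z + φ y)) K μ :=
    (hf.continuous.comp (by fun_prop : Continuous fun y => z + φ y)).continuousOn
      |>.integrableOn_compact hK
  have hint' : IntegrableOn (fun y => fderiv ℝ f (x + φ y)) K μ :=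
    (hc.comp (Continuous.prodMk_right x)).continuousOn.integrableOn_compact hK
  refine hasFDerivAt_integral_of_dominated_of_fderiv_le (bound := fun _ => C)
    (F' := fun x y => fderiv ℝ f (x + φ y)) (Metric.closedBall_mem_nhds x one_pos)
    (.of_forall fun z => (hint z).aestronglyMeasurable) (hint x) hint'.aestronglyMeasurable ?_
    (integrable_const C) ?_
  · exact (ae_restrict_iff' hK.measurableSet).2 (.of_forall fun y hy z hz => hC (z, y) ⟨hz, hy⟩)
  · exact .of_forall fun y z _ =>
      (hasFDerivAt_comp_add_right (φ y)).2 (hf.differentiable one_ne_zero _).hasFDerivAt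

variable {d N : ℕ}

lemma PeriodicWF.integral_fderiv_eq_zero {f : (Fin N → Fin d → ℝ) → ℂ} (hp : PeriodicWF d N f)
    (hf : ContDiff ℝ 1 f) (e : Fin N → Fin d → ℝ) : ∫ x in boxN d N, fderiv ℝ f x e = 0 := by
  have hderiv := hasFDerivAt_setIntegral_add (μ := volume) (isCompact_boxN d N) hf continuous_id 0
  have hconst : (fun c => ∫ x in boxN d N, f (c + id x)) = fun _ => ∫ x in boxN d N, f x :=
    funext fun c => by simpa only [id, add_comm] using hp.setIntegral_add_const c
  rw [hconst] at hderiv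
  have hzero := DFunLike.congr_fun (hderiv.unique (hasFDerivAt_const _ _)) e
  rw [ContinuousLinearMap.integral_apply (by
    simpa using integrable_boxN (hf.continuous_fderiv one_ne_zero))] at hzero
  simpa using hzero

lemma PeriodicWF.fderiv_apply {f : (Fin N → Fin d → ℝ) → ℂ} (hp : PeriodicWF d N f)
    (e : Fin N → Fin d → ℝ) : PeriodicWF d N fun x => fderiv ℝ f x e := by
  intro x k
  have hshift : (fun y : Fin N → Fin d → ℝ => f (y + fun i j => (k i j : ℝ))) = f :=
    funext fun y => hp y k
  change _ = fderiv ℝ f x e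
  conv_rhs => rw [← hshift, fderiv_comp_add_right]
  rfl

namespace WaveFun

variable {f g : WaveFun d N}

/-- The partial derivative of a `C¹` wave function in the `l`-th coordinate of particle `j`. -/
def pderiv (f : WaveFun d N) (hf : ContDiff ℝ 1 f) (j : Fin N) (l : Fin d) : WaveFun d N :=
  mk (fun x => fderiv ℝ f x (dir d N j l)) <|
    (hf.continuous_fderiv one_ne_zero).clm_apply continuous_const

lemma contDiff_pderiv (hf : ContDiff ℝ 2 f) (j : Fin N) (l : Fin d) :
    ContDiff ℝ 1 (f.pderiv (hf.of_le one_le_two) j l) :=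
  (hf.fderiv_right (m := 1) (by norm_num)).clm_apply contDiff_const

lemma inner_pderiv_left (hpf : PeriodicWF d N f) (hf : ContDiff ℝ 1 f) (hpg : PeriodicWF d N g)
    (hg : ContDiff ℝ 1 g) (j : Fin N) (l : Fin d) :
    ⟪f.pderiv hf j l, g⟫_ℂ = -⟪f, g.pderiv hg j l⟫_ℂ := by
  have hconj : ContDiff ℝ 1 fun x => conj (f x) := Complex.conjCLE.contDiff.comp hf
  have hzero := PeriodicWF.integral_fderiv_eq_zero (f := fun x => conj (f x) * g x)
    (fun x k => by simp only [hpf x k, hpg x k]) (hconj.mul hg) (dir d N j l)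
  have hprod (x) : fderiv ℝ (fun x => conj (f x) * g x) x (dir d N j l) =
      conj (f x) * g.pderiv hg j l x + conj (f.pderiv hf j l x) * g x := by
    have hfd : fderiv ℝ (fun x => conj (f x)) x (dir d N j l) = conj (f.pderiv hf j l x) := by
      rw [show (fun x => conj (f x)) = Complex.conjCLE ∘ f from rfl,
        Complex.conjCLE.comp_fderiv]
      rfl
    rw [fderiv_fun_mul (hconj.differentiable one_ne_zero x) (hg.differentiable one_ne_zero x),
      _root_.add_apply, _root_.smul_apply,
      _root_.smul_apply, hfd, smul_eq_mul, smul_eq_mul, mul_comm (g x)]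
    rfl
  simp only [hprod] at hzero
  refine eq_neg_of_add_eq_zero_right (Eq.trans ?_ hzero)
  exact (integral_add (star f * g.pderiv hg j l).integrable
    (star (f.pderiv hf j l) * g).integrable).symm

lemma avg_apply_eq_integral_add (hp : PeriodicWF d N f) (i : Fin N) (x : Fin N → Fin d → ℝ) :
    avg i f x = ∫ y in boxd d, f (x + Pi.single i y) := by
  have hlat : LatticePeriodic fun y => f (Function.update x i y) := by
    intro y k
    refine Eq.trans (congrArg f ?_) (hp (Function.update x i y) (Pi.single i k))
    ext a b
    obtain rfl | ha := eq_or_ne a i <;> simp [*]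
  rw [avg_apply]
  refine (hlat.setIntegral_cube_add_const (x i)).symm.trans ?_
  congr 1 with y
  congr 1
  ext a b
  obtain rfl | ha := eq_or_ne a i <;> simp [*, add_comm]

lemma hasFDerivAt_avg (hp : PeriodicWF d N f) (hf : ContDiff ℝ 1 f) (i : Fin N)
    (x : Fin N → Fin d → ℝ) :
    HasFDerivAt (avg i f) (∫ y in boxd d, fderiv ℝ f (x + Pi.single i y)) x := by
  rw [show ⇑(avg i f) = _ from funext (avg_apply_eq_integral_add hp i)]
  exact hasFDerivAt_setIntegral_add (isCompact_boxd d) hf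
    (continuous_single (A := fun _ => Fin d → ℝ) i) x

lemma contDiff_avg (hp : PeriodicWF d N f) (hf : ContDiff ℝ 1 f) (i : Fin N) :
    ContDiff ℝ 1 (avg i f) := by
  rw [contDiff_one_iff_fderiv]
  refine ⟨fun x => (hasFDerivAt_avg hp hf i x).differentiableAt, ?_⟩
  rw [show fderiv ℝ (avg i f) = _ from funext fun x => (hasFDerivAt_avg hp hf i x).fderiv]
  exact continuous_integral_boxd ((hf.continuous_fderiv one_ne_zero).comp
    (continuous_fst.add ((continuous_single (A := fun _ => Fin d → ℝ) i).comp continuous_snd)))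

lemma pderiv_avg (hp : PeriodicWF d N f) (hf : ContDiff ℝ 1 f) (i j : Fin N) (l : Fin d) :
    (avg i f).pderiv (contDiff_avg hp hf i) j l = avg i (f.pderiv hf j l) := by
  ext x
  rw [avg_apply_eq_integral_add (hp.fderiv_apply (dir d N j l)), pderiv, mk_apply,
    (hasFDerivAt_avg hp hf i x).fderiv, ContinuousLinearMap.integral_apply]
  · rfl
  · exact integrable_boxd ((hf.continuous_fderiv one_ne_zero).comp
      (continuous_const.add (continuous_single (A := fun _ => Fin d → ℝ) i)))

lemma periodicWF_avg (hp : PeriodicWF d N f) (i : Fin N) : PeriodicWF d N (avg i f) := by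
  intro x k
  simp only [avg_apply_eq_integral_add hp]
  congr 1 with y
  refine Eq.trans (congrArg f ?_) (hp (x + Pi.single i y) k)
  ext a b
  simp [add_right_comm]

lemma periodicWF_dev (hp : PeriodicWF d N f) (i : Fin N) : PeriodicWF d N (dev i f) :=
  fun x k => congrArg₂ (· - ·) (hp x k) (periodicWF_avg hp i x k)

lemma contDiff_dev (hp : PeriodicWF d N f) (hf : ContDiff ℝ 1 f) (i : Fin N) :
    ContDiff ℝ 1 (dev i f) :=
  hf.sub (contDiff_avg hp hf i)

lemma pderiv_dev (hp : PeriodicWF d N f) (hf : ContDiff ℝ 1 f) (i j : Fin N) (l : Fin d) :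
    (dev i f).pderiv (contDiff_dev hp hf i) j l = dev i (f.pderiv hf j l) := by
  refine WaveFun.ext fun x => Eq.trans ?_
    (congrArg (fun g : WaveFun d N => f.pderiv hf j l x - g x) (pderiv_avg hp hf i j l))
  exact DFunLike.congr_fun (fderiv_sub (hf.differentiable one_ne_zero x)
    ((contDiff_avg hp hf i).differentiable one_ne_zero x)) _

/-- The kinetic energy operator `-∑ Δ_{x_j}` applied to a `C²` wave function. -/
def kinetic (f : WaveFun d N) (hf : ContDiff ℝ 2 f) : WaveFun d N :=
  -∑ j, ∑ l, (f.pderiv (hf.of_le one_le_two) j l).pderiv (contDiff_pderiv hf j l) j l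

lemma inner_kinetic (hpg : PeriodicWF d N g) (hg : ContDiff ℝ 1 g) (hpf : PeriodicWF d N f)
    (hf : ContDiff ℝ 2 f) :
    ⟪g, f.kinetic hf⟫_ℂ =
      ∑ j, ∑ l, ⟪g.pderiv hg j l, f.pderiv (hf.of_le one_le_two) j l⟫_ℂ := by
  simp only [kinetic, inner_neg_right, inner_sum, ← Finset.sum_neg_distrib]
  refine Finset.sum_congr rfl fun j _ => Finset.sum_congr rfl fun l _ => ?_
  exact (inner_pderiv_left hpg hg (hpf.fderiv_apply _) (contDiff_pderiv hf j l) j l).symm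

end WaveFun

end Derivative

section PlaneWave

variable {ι : Type*} [Fintype ι]

/-- The plane wave `e^{ip·x}` of momentum `p = 2πk`. -/
def planeWave (k : ι → ℤ) (x : ι → ℝ) : ℂ :=
  Complex.exp (Complex.I * ∑ l, (2 * π * (k l : ℝ)) * x l)

lemma contDiff_planeWave (k : ι → ℤ) {n : WithTop ℕ∞} : ContDiff ℝ n (planeWave k) := by
  have hphase : ContDiff ℝ n fun x : ι → ℝ => ∑ l, (2 * π * (k l : ℝ)) * x l := by fun_prop
  exact (contDiff_const.mul (Complex.ofRealCLM.contDiff.comp hphase)).cexp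

@[fun_prop]
lemma continuous_planeWave (k : ι → ℤ) : Continuous (planeWave k) :=
  (contDiff_planeWave k (n := 0)).continuous

lemma planeWave_add (k : ι → ℤ) (x y : ι → ℝ) :
    planeWave k (x + y) = planeWave k x * planeWave k y := by
  simp [planeWave, ← Complex.exp_add, mul_add, Finset.sum_add_distrib]

lemma planeWave_neg_left (k : ι → ℤ) (x : ι → ℝ) : planeWave (-k) x = conj (planeWave k x) := by
  rw [planeWave, planeWave, ← Complex.exp_conj, map_mul, Complex.conj_I, Complex.conj_ofReal]
  simp

lemma planeWave_sub (k : ι → ℤ) (x y : ι → ℝ) :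
    planeWave k (x - y) = planeWave k x * conj (planeWave k y) := by
  rw [sub_eq_add_neg, planeWave_add, ← planeWave_neg_left]
  simp [planeWave]

lemma norm_planeWave (k : ι → ℤ) (x : ι → ℝ) : ‖planeWave k x‖ = 1 := by
  rw [planeWave, mul_comm, Complex.norm_exp_ofReal_mul_I]

lemma planeWave_zero_left (x : ι → ℝ) : planeWave 0 x = 1 := by simp [planeWave]

lemma planeWave_intCast (k m : ι → ℤ) : planeWave k (fun l => (m l : ℝ)) = 1 := by
  rw [planeWave, Complex.exp_eq_one_iff]
  refine ⟨∑ l, k l * m l, ?_⟩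
  push_cast
  rw [Finset.mul_sum, Finset.sum_mul]
  exact Finset.sum_congr rfl fun l _ => by ring

lemma latticePeriodic_planeWave (k : ι → ℤ) : LatticePeriodic (planeWave k) := fun x m =>
  (planeWave_add k x _).trans (by rw [planeWave_intCast, mul_one])

lemma planeWave_single [DecidableEq ι] (k : ι → ℤ) (l : ι) (t : ℝ) :
    planeWave k (Pi.single l t) = Complex.exp (2 * π * Complex.I * k l * t) := by
  rw [planeWave, Finset.sum_eq_single_of_mem l (Finset.mem_univ l) (by simp +contextual),
    Pi.single_eq_same]
  push_cast
  ring_nf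

lemma integral_planeWave (k : ι → ℤ) :
    ∫ x in Set.univ.pi fun _ => Set.Icc (0 : ℝ) 1, planeWave k x = if k = 0 then 1 else 0 := by
  split_ifs with hk
  · simp [hk, planeWave_zero_left, Measure.real, Real.volume_Icc_pi]
  classical
  obtain ⟨l, hl⟩ := Function.ne_iff.1 hk
  have hhalf : planeWave k (Pi.single l (2 * k l : ℝ)⁻¹) = -1 := by
    have hl' : (k l : ℂ) ≠ 0 := Int.cast_ne_zero.2 hl
    rw [planeWave_single, ← Complex.exp_pi_mul_I]
    congr 1
    push_cast
    field_simp
  -- Translating by half a period in a direction with `k l ≠ 0` flips the sign of the wave.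
  have hshift := (latticePeriodic_planeWave k).setIntegral_cube_add_const
    (Pi.single l (2 * k l : ℝ)⁻¹)
  simp only [planeWave_add, hhalf, mul_neg_one, integral_neg] at hshift
  exact self_eq_neg.1 hshift.symm

attribute [local instance] instMeasureSpaceUnitAddCircle isAddHaarMeasure_unitAddCircle
  isProbabilityMeasure_unitAddCircle

lemma mFourier_eq_planeWave_torusRep (k : ι → ℤ) (t : UnitAddTorus ι) :
    UnitAddTorus.mFourier k t = planeWave k (torusRep t) := by
  simp only [UnitAddTorus.mFourier, ContinuousMap.coe_mk, planeWave]
  push_cast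
  rw [Finset.mul_sum, Complex.exp_sum]
  refine Finset.prod_congr rfl fun l _ => ?_
  rw [← congrFun (coe_torusRep t) l, fourier_coe_apply]
  congr 1
  push_cast
  ring

lemma hasSum_norm_integral_planeWave_mul_sq {h : (ι → ℝ) → ℂ} (hh : Continuous h) :
    HasSum (fun k : ι → ℤ =>
        ‖∫ x in Set.univ.pi fun _ => Set.Icc (0 : ℝ) 1, conj (planeWave k x) * h x‖ ^ 2)
      (∫ x in Set.univ.pi fun _ => Set.Icc (0 : ℝ) 1, ‖h x‖ ^ 2) := by
  obtain ⟨C, hC⟩ := (isCompact_univ_pi fun _ : ι => isCompact_Icc).exists_bound_of_continuousOn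
    hh.continuousOn
  have hL2 : MemLp (fun t => h (torusRep t)) 2 (volume : Measure (UnitAddTorus ι)) :=
    MemLp.of_bound (hh.measurable.comp
      measurableEmbedding_torusRep.measurable).aestronglyMeasurable C
      (.of_forall fun t => hC _ fun l _ => torusRep_mem_Icc t l)
  convert UnitAddTorus.hasSum_sq_mFourierCoeff (hL2.toLp _) using 1
  · ext k
    rw [← measurePreserving_torusRep.integral_comp measurableEmbedding_torusRep]
    congr 2
    refine integral_congr_ae ?_
    filter_upwards [hL2.coeFn_toLp] with t ht
    rw [ht, UnitAddTorus.mFourier_neg, mFourier_eq_planeWave_torusRep, smul_eq_mul]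
  · rw [← measurePreserving_torusRep.integral_comp measurableEmbedding_torusRep]
    refine integral_congr_ae ?_
    filter_upwards [hL2.coeFn_toLp] with t ht
    rw [ht]

end PlaneWave

section Poincare

variable {d N : ℕ}

namespace WaveFun

/-- The `N`-particle plane wave in which particle `i` has momentum `2πk_i`. -/
def planeWave (k : Fin N → Fin d → ℤ) : WaveFun d N :=
  mk (fun x => _root_.planeWave (Function.uncurry k) (Function.uncurry x)) <|
    (continuous_planeWave _).comp (continuous_pi fun _ => by fun_prop)

lemma contDiff_planeWave (k : Fin N → Fin d → ℤ) : ContDiff ℝ 1 (planeWave k) :=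
  (_root_.contDiff_planeWave _).comp (contDiff_pi.2 fun _ => by fun_prop)

lemma periodicWF_planeWave (k : Fin N → Fin d → ℤ) : PeriodicWF d N (planeWave k) :=
  fun _ m => latticePeriodic_planeWave _ _ (Function.uncurry m)

lemma planeWave_add_single (k : Fin N → Fin d → ℤ) (x : Fin N → Fin d → ℝ) (i : Fin N)
    (y : Fin d → ℝ) :
    planeWave k (x + Pi.single i y) = planeWave k x * _root_.planeWave (k i) y := by
  refine (planeWave_add _ (Function.uncurry x) (Function.uncurry (Pi.single i y))).trans ?_
  congr 1
  simp only [_root_.planeWave, Fintype.sum_prod_type, Function.uncurry_apply_pair]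
  rw [Finset.sum_eq_single_of_mem i (Finset.mem_univ i) (by simp +contextual)]
  simp only [Pi.single_eq_same]

lemma avg_planeWave (i : Fin N) (k : Fin N → Fin d → ℤ) :
    avg i (planeWave k) = if k i = 0 then planeWave k else 0 := by
  ext x
  rw [avg_apply_eq_integral_add (periodicWF_planeWave k)]
  simp only [planeWave_add_single, integral_const_mul]
  rw [boxd, integral_planeWave]
  split_ifs <;> simp

lemma pderiv_planeWave (k : Fin N → Fin d → ℤ) (j : Fin N) (l : Fin d) :
    (planeWave k).pderiv (contDiff_planeWave k) j l =
      (2 * π * Complex.I * k j l : ℂ) • planeWave k := by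
  ext x
  rw [pderiv, mk_apply,
    ← ((contDiff_planeWave k).differentiable one_ne_zero x).lineDeriv_eq_fderiv]
  have hline (t : ℝ) : planeWave k (x + t • dir d N j l) =
      planeWave k x * Complex.exp (2 * π * Complex.I * k j l * t) := by
    rw [dir, ← Pi.single_smul', ← Pi.single_smul', planeWave_add_single, planeWave_single,
      smul_eq_mul, mul_one]
  have hderiv : HasDerivAt (fun t : ℝ => (2 * π * Complex.I * k j l * t : ℂ))
      (2 * π * Complex.I * k j l) 0 := by
    simpa using ((hasDerivAt_id (0 : ℝ)).ofReal_comp).const_mul (2 * π * Complex.I * k j l)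
  simpa [lineDeriv, hline, mul_comm] using (hderiv.cexp.const_mul (planeWave k x)).deriv

lemma inner_planeWave_dev (k : Fin N → Fin d → ℤ) (i : Fin N) (f : WaveFun d N) :
    ⟪planeWave k, dev i f⟫_ℂ = if k i = 0 then 0 else ⟪planeWave k, f⟫_ℂ := by
  rw [← (isSymmetricProjection_dev i).isSymmetric, LinearMap.sub_apply, avg_planeWave]
  split_ifs <;> simp

lemma inner_planeWave_pderiv {f : WaveFun d N} (hp : PeriodicWF d N f) (hf : ContDiff ℝ 1 f)
    (k : Fin N → Fin d → ℤ) (j : Fin N) (l : Fin d) :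
    ⟪planeWave k, f.pderiv hf j l⟫_ℂ = 2 * π * Complex.I * k j l * ⟪planeWave k, f⟫_ℂ := by
  rw [← neg_eq_iff_eq_neg.2 (inner_pderiv_left (periodicWF_planeWave k) (contDiff_planeWave k)
    hp hf j l), pderiv_planeWave, inner_smul_left]
  simp [Complex.conj_ofNat]

lemma hasSum_norm_inner_planeWave_sq (f : WaveFun d N) :
    HasSum (fun k => ‖⟪planeWave k, f⟫_ℂ‖ ^ 2) (‖f‖ ^ 2) := by
  have hcurry := MeasurableEquiv.measurableEmbedding (MeasurableEquiv.curry (Fin N) (Fin d) ℝ)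
  have hcont : Continuous fun x => f (MeasurableEquiv.curry (Fin N) (Fin d) ℝ x) :=
    (map_continuous f).comp (continuous_pi fun i => continuous_pi fun l => continuous_apply (i, l))
  rw [norm_sq_eq_integral, ← (measurePreserving_curry d N).integral_comp hcurry,
    ← (Equiv.curry (Fin N) (Fin d) ℤ).hasSum_iff]
  convert hasSum_norm_integral_planeWave_mul_sq hcont using 1
  ext k
  simp only [Function.comp_apply]
  rw [inner_def, ← (measurePreserving_curry d N).integral_comp hcurry]
  rfl

lemma poincare {f : WaveFun d N} (hp : PeriodicWF d N f) (hf : ContDiff ℝ 1 f) (j : Fin N) :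
    (2 * π) ^ 2 * ‖dev j f‖ ^ 2 ≤ ∑ l, ‖f.pderiv hf j l‖ ^ 2 := by
  refine hasSum_le (fun k => ?_) ((hasSum_norm_inner_planeWave_sq _).mul_left _)
    (hasSum_sum fun l _ => hasSum_norm_inner_planeWave_sq _)
  simp only [inner_planeWave_dev, inner_planeWave_pderiv hp hf]
  split_ifs with hk
  · rw [norm_zero, zero_pow two_ne_zero, mul_zero]
    exact Finset.sum_nonneg fun _ _ => sq_nonneg _
  obtain ⟨l, hl⟩ := Function.ne_iff.1 hk
  have hone : (1 : ℝ) ≤ |(k j l : ℝ)| := by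
    rw [← Int.cast_abs]
    exact_mod_cast Int.one_le_abs hl
  calc (2 * π) ^ 2 * ‖⟪planeWave k, f⟫_ℂ‖ ^ 2
      = (2 * π * 1 * ‖⟪planeWave k, f⟫_ℂ‖) ^ 2 := by ring
    _ ≤ (2 * π * |(k j l : ℝ)| * ‖⟪planeWave k, f⟫_ℂ‖) ^ 2 := by gcongr
    _ = ‖2 * π * Complex.I * k j l * ⟪planeWave k, f⟫_ℂ‖ ^ 2 := by
      simp [abs_of_pos pi_pos]
    _ ≤ ∑ l, ‖2 * π * Complex.I * k j l * ⟪planeWave k, f⟫_ℂ‖ ^ 2 :=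
      Finset.single_le_sum (f := fun l => ‖2 * π * Complex.I * k j l * ⟪planeWave k, f⟫_ℂ‖ ^ 2)
        (fun _ _ => sq_nonneg _) (Finset.mem_univ l)

end WaveFun

end Poincare

section KineticComparison

variable {d N : ℕ}

namespace WaveFun

variable {f : WaveFun d N}

lemma sum_poincare (hp : PeriodicWF d N f) (hf : ContDiff ℝ 1 f) :
    (2 * π) ^ 2 * ∑ j, ‖dev j f‖ ^ 2 ≤ ∑ j, ∑ l, ‖f.pderiv hf j l‖ ^ 2 := by
  rw [Finset.mul_sum]
  exact Finset.sum_le_sum fun j _ => poincare hp hf j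

lemma poincare_kinetic (hp : PeriodicWF d N f) (hf : ContDiff ℝ 2 f) :
    (2 * π) ^ 2 * ∑ j, ‖dev j f‖ ^ 2 ≤ (⟪f, f.kinetic hf⟫_ℂ).re := by
  have hf1 := hf.of_le one_le_two
  refine (sum_poincare hp hf1).trans_eq ?_
  rw [inner_kinetic hp hf1 hp hf]
  simp only [Complex.re_sum]
  exact Finset.sum_congr rfl fun j _ => Finset.sum_congr rfl fun l _ =>
    (inner_self_eq_norm_sq (𝕜 := ℂ) _).symm

lemma inner_dev_kinetic (hp : PeriodicWF d N f) (hf : ContDiff ℝ 2 f) (i : Fin N) :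
    ⟪dev i f, f.kinetic hf⟫_ℂ = ((∑ j, ∑ l, ‖(dev i f).pderiv
      (contDiff_dev hp (hf.of_le one_le_two) i) j l‖ ^ 2 : ℝ) : ℂ) := by
  have hf1 := hf.of_le one_le_two
  rw [inner_kinetic (periodicWF_dev hp i) (contDiff_dev hp hf1 i) hp hf]
  simp only [pderiv_dev hp hf1, inner_symmetricProjection_apply_self (isSymmetricProjection_dev i)]
  norm_cast

lemma poincare_excitationNumber_kinetic (hp : PeriodicWF d N f) (hf : ContDiff ℝ 2 f) :
    (2 * π) ^ 2 * ‖excitationNumber f‖ ^ 2 ≤ (⟪excitationNumber f, f.kinetic hf⟫_ℂ).re := by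
  rw [norm_excitationNumber_sq, excitationNumber_apply, sum_inner, Complex.re_sum,
    Finset.sum_comm, Finset.mul_sum]
  refine Finset.sum_le_sum fun i _ => ?_
  rw [inner_dev_kinetic hp hf i, Complex.ofReal_re]
  exact sum_poincare (periodicWF_dev hp i) _

lemma inner_kinetic_excitationNumber (hp : PeriodicWF d N f) (hf : ContDiff ℝ 2 f) :
    ⟪f.kinetic hf, excitationNumber f⟫_ℂ =
      ∑ i, ∑ j, ∫ x in boxN d N, ∑ l, fderiv ℝ (Qproj d N i f) x (dir d N j l) *
        conj (fderiv ℝ f x (dir d N j l)) := by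
  have hf1 := hf.of_le one_le_two
  rw [excitationNumber_apply, inner_sum]
  refine Finset.sum_congr rfl fun i _ => ?_
  rw [← inner_conj_symm, inner_kinetic (periodicWF_dev hp i) (contDiff_dev hp hf1 i) hp hf,
    map_sum]
  refine Finset.sum_congr rfl fun j _ => ?_
  simp only [map_sum, inner_conj_symm]
  refine Eq.trans ?_ (integral_finsetSum _ fun l _ => ((dev i f).pderiv
    (contDiff_dev hp hf1 i) j l * star (f.pderiv hf1 j l)).integrable).symm
  simp only [inner_def, mul_comm (conj _)]
  rfl

end WaveFun

end KineticComparison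

section PairSums

variable {ι M : Type*} [Fintype ι] [LinearOrder ι] [AddCommMonoid M] {F : ι → ι → M}

lemma sum_sum_eq_two_nsmul_sum_sum_lt_add (hF : ∀ i j, F i j = F j i) :
    ∑ i, ∑ j, F i j = 2 • (∑ i, ∑ j, if i < j then F i j else 0) + ∑ i, F i i := by
  have hgt : ∑ i, ∑ j, (if j < i then F i j else 0) = ∑ i, ∑ j, if i < j then F i j else 0 := by
    rw [Finset.sum_comm]
    simp only [hF]
  have hdiag : ∑ i, F i i = ∑ i, ∑ j, if i = j then F i j else 0 := by
    simp only [Finset.sum_ite_eq, Finset.mem_univ, if_true]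
  rw [two_nsmul, hdiag]
  nth_rewrite 2 [← hgt]
  simp only [← Finset.sum_add_distrib]
  refine Finset.sum_congr rfl fun i _ => Finset.sum_congr rfl fun j _ => ?_
  obtain hij | rfl | hij := lt_trichotomy i j
  · simp [hij, hij.not_gt, hij.ne]
  · simp
  · simp [hij, hij.not_gt, hij.ne']

lemma sum_sum_lt_eq_sum_erase (hF : ∀ i j, F i j = F j i) (i : ι)
    (hzero : ∀ a b, a ≠ i → b ≠ i → F a b = 0) :
    ∑ a, ∑ b, (if a < b then F a b else 0) = ∑ j ∈ Finset.univ.erase i, F i j := by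
  have hrow (a : ι) (ha : a ∈ Finset.univ.erase i) :
      ∑ b, (if a < b then F a b else 0) = if a < i then F i a else 0 := by
    rw [Finset.sum_eq_single_of_mem i (Finset.mem_univ i), hF i a]
    intro b _ hb
    rw [hzero a b (Finset.ne_of_mem_erase ha) hb, ite_self]
  rw [← Finset.add_sum_erase _ _ (Finset.mem_univ i), Finset.sum_congr rfl hrow,
    ← Finset.add_sum_erase _ _ (Finset.mem_univ i), if_neg (lt_irrefl i), zero_add,
    ← Finset.sum_add_distrib]
  refine Finset.sum_congr rfl fun j hj => ?_
  obtain hij | hij := (Finset.ne_of_mem_erase hj).lt_or_gt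
  · simp [hij, hij.not_gt]
  · simp [hij, hij.not_gt]

end PairSums

section Potential

variable {d N : ℕ} {v : (Fin d → ℝ) → ℝ} {vhat : (Fin d → ℤ) → ℝ}

namespace PotentialAssumptions

variable (hv : PotentialAssumptions d v vhat)
include hv

lemma hasSum (x : Fin d → ℝ) : HasSum (fun k => (vhat k : ℂ) * planeWave k x) (v x) := by
  have hs : Summable fun k => (vhat k : ℂ) * planeWave k x := by
    refine .of_norm ?_
    simpa [norm_planeWave, abs_of_nonneg (hv.nonneg _)] using hv.summable
  exact (hv.expansion x).symm ▸ hs.hasSum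

lemma hasSum_vhat : HasSum vhat (v 0) := by
  simpa [planeWave, Complex.hasSum_ofReal] using hv.hasSum 0

lemma abs_le_apply_zero (x : Fin d → ℝ) : |v x| ≤ v 0 := by
  rw [← Real.norm_eq_abs, ← Complex.norm_real, ← (hv.hasSum x).tsum_eq]
  refine tsum_of_norm_bounded hv.hasSum_vhat fun k => ?_
  simp [norm_planeWave, abs_of_nonneg (hv.nonneg k)]

lemma vhat_zero_le : vhat 0 ≤ v 0 := le_hasSum hv.hasSum_vhat 0 fun k _ => hv.nonneg k

lemma sub_comm (x y : Fin d → ℝ) : v (x - y) = v (y - x) := by rw [← hv.even, neg_sub]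

lemma integral_eq : ∫ y in boxd d, v y = vhat 0 := by
  have hcoeff : (vhat 0 : ℂ) = ∫ y in boxd d, (v y : ℂ) := by simpa using hv.coeffs 0
  rw [integral_complex_ofReal] at hcoeff
  exact_mod_cast hcoeff.symm

lemma integral_sub (c : Fin d → ℝ) : ∫ y in boxd d, v (y - c) = vhat 0 := by
  have hlat : LatticePeriodic v := hv.periodic
  rw [← hv.integral_eq]
  exact hlat.setIntegral_cube_add_const (-c)

lemma vhat_zero_mul_sq_le_sum_sum {ι : Type*} [Fintype ι] (x : ι → Fin d → ℝ) :
    vhat 0 * Fintype.card ι ^ 2 ≤ ∑ i, ∑ j, v (x i - x j) := by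
  have hmode (k : Fin d → ℤ) : ∑ i, ∑ j, ((vhat k : ℂ) * planeWave k (x i - x j)).re =
      vhat k * ‖∑ i, planeWave k (x i)‖ ^ 2 := by
    rw [← Complex.ofReal_re (vhat k * _), Complex.ofReal_mul, Complex.ofReal_pow,
      ← Complex.mul_conj', map_sum, Finset.sum_mul_sum]
    simp only [planeWave_sub, Finset.mul_sum, Complex.re_sum]
  have hsum := hasSum_sum fun i (_ : i ∈ Finset.univ) => hasSum_sum fun j
    (_ : j ∈ Finset.univ) => Complex.hasSum_re (hv.hasSum (x i - x j))
  simp only [Complex.ofReal_re, hmode] at hsum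
  simpa [planeWave_zero_left] using
    le_hasSum hsum 0 fun k _ => mul_nonneg (hv.nonneg k) (sq_nonneg _)

end PotentialAssumptions

namespace WaveFun

/-- Multiplication by the pair interaction `v(x_i - x_j)`. -/
def pairPotential (hv : Continuous v) (i j : Fin N) : WaveFun d N :=
  mk fun x => (v (x i - x j) : ℂ)

lemma pairPotential_apply (hv : Continuous v) (i j : Fin N) (x : Fin N → Fin d → ℝ) :
    pairPotential hv i j x = v (x i - x j) := rfl

lemma independentOf_pairPotential (hv : Continuous v) {a i j : Fin N} (hi : i ≠ a) (hj : j ≠ a) :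
    (pairPotential hv i j).IndependentOf a := fun x y => by
  simp only [pairPotential_apply, Function.update_of_ne hi, Function.update_of_ne hj]

/-- The mean-field interaction `(N-1)⁻¹ ∑_{i<j} v(x_i - x_j)`. -/
def interaction (hv : Continuous v) : WaveFun d N :=
  ((((N : ℝ) - 1)⁻¹ : ℝ) : ℂ) • ∑ i, ∑ j, if i < j then pairPotential hv i j else 0

lemma interaction_apply (hv : Continuous v) (x : Fin N → Fin d → ℝ) :
    interaction hv x =
      (((N : ℝ) - 1)⁻¹ * ∑ i, ∑ j, if i < j then v (x i - x j) else 0 : ℝ) := by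
  simp only [interaction, smul_apply, sum_apply, Complex.ofReal_mul, Complex.ofReal_sum,
    apply_ite Complex.ofReal, Complex.ofReal_zero]
  congr! with i _ j _
  split_ifs <;> rfl

lemma inner_interaction_mul (hv : Continuous v) (f g : WaveFun d N) :
    ⟪f, interaction hv * g⟫_ℂ = ((((N : ℝ) - 1)⁻¹ : ℝ) : ℂ) *
      ∑ i, ∑ j, if i < j then ⟪f, pairPotential hv i j * g⟫_ℂ else 0 := by
  simp only [interaction, smul_mul_assoc, inner_smul_right, Finset.sum_mul, inner_sum, ite_mul,
    zero_mul, apply_ite (fun h : WaveFun d N => ⟪f, h⟫_ℂ), inner_zero_right]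

lemma hamOp_eq_kinetic_add (hv : Continuous v) (f : WaveFun d N) (hf : ContDiff ℝ 2 f) :
    HamOp d N v f = (f.kinetic hf + interaction hv * f : WaveFun d N) := by
  funext x
  simp only [HamOp, add_apply, kinetic, neg_apply, sum_apply, mul_apply, interaction,
    smul_apply, Finset.sum_mul, mul_assoc]
  refine congrArg₂ (· + ·) rfl (congrArg (_ * ·) (Finset.sum_congr rfl fun i _ =>
    Finset.sum_congr rfl fun j _ => ?_))
  split_ifs
  · rfl
  · exact (zero_mul _).symm

lemma inner_pairPotential_mul_self (hv : Continuous v) (i j : Fin N) (f : WaveFun d N) :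
    ⟪f, pairPotential hv i j * f⟫_ℂ = (∫ x in boxN d N, v (x i - x j) * ‖f x‖ ^ 2 : ℝ) := by
  rw [← integral_complex_ofReal]
  refine integral_congr_ae (.of_forall fun x => ?_)
  simp only [mul_apply, pairPotential_apply, mul_left_comm, Complex.conj_mul']
  push_cast
  rfl

lemma potentialEnergy_eq_re_inner (hv : Continuous v) (f : WaveFun d N) :
    potentialEnergy d N v f = (⟪f, interaction hv * f⟫_ℂ).re := by
  rw [inner_interaction_mul, Complex.re_ofReal_mul, potentialEnergy]
  simp only [inner_pairPotential_mul_self, Complex.re_sum, apply_ite Complex.re,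
    Complex.ofReal_re, Complex.zero_re]

end WaveFun

namespace PotentialAssumptions

variable (hv : PotentialAssumptions d v vhat)
include hv

lemma pairPotential_comm (i j : Fin N) :
    WaveFun.pairPotential hv.continuous i j = WaveFun.pairPotential hv.continuous j i :=
  WaveFun.ext fun x => congrArg Complex.ofReal (hv.sub_comm (x i) (x j))

lemma avg_pairPotential {i j : Fin N} (hij : i ≠ j) :
    WaveFun.avg j (WaveFun.pairPotential hv.continuous i j) = algebraMap ℂ _ (vhat 0 : ℂ) := by
  ext x
  simp only [hv.pairPotential_comm i j, WaveFun.avg_apply, WaveFun.pairPotential_apply,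
    Function.update_self, Function.update_of_ne hij, integral_complex_ofReal, hv.integral_sub]
  rfl

lemma avg_pairPotential_mul {i j : Fin N} (hij : i ≠ j) {f : WaveFun d N}
    (hf : f.IndependentOf j) :
    WaveFun.avg j (WaveFun.pairPotential hv.continuous i j * f) = (vhat 0 : ℂ) • f := by
  rw [mul_comm, hf.avg_mul, hv.avg_pairPotential hij, mul_comm, Algebra.smul_def]

lemma le_re_interaction (hN : 2 ≤ N) (x : Fin N → Fin d → ℝ) :
    N / (2 * (N - 1)) * (N * vhat 0 - v 0) ≤ (WaveFun.interaction hv.continuous x).re := by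
  have hN1 : (0 : ℝ) < N - 1 := sub_pos.2 (Nat.one_lt_cast.2 hN)
  have hfull := hv.vhat_zero_mul_sq_le_sum_sum x
  rw [sum_sum_eq_two_nsmul_sum_sum_lt_add fun i j => hv.sub_comm (x i) (x j)] at hfull
  simp only [sub_self, Finset.sum_const, Finset.card_univ, Fintype.card_fin, nsmul_eq_mul] at hfull
  rw [WaveFun.interaction_apply, Complex.ofReal_re]
  calc N / (2 * (N - 1)) * (N * vhat 0 - v 0)
      = ((N : ℝ) - 1)⁻¹ * ((vhat 0 * N ^ 2 - N * v 0) / 2) := by field_simp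
    _ ≤ _ := by
      gcongr
      push_cast at hfull
      linarith

lemma potentialEnergy_one (hN : 2 ≤ N) :
    potentialEnergy d N v (1 : WaveFun d N) = N * vhat 0 / 2 := by
  have hN1 : (N : ℝ) - 1 ≠ 0 := (sub_pos.2 (Nat.one_lt_cast.2 hN)).ne'
  have hpair (i j : Fin N) (hij : i < j) :
      ∫ x in boxN d N, v (x i - x j) * ‖(1 : WaveFun d N) x‖ ^ 2 = vhat 0 := by
    have hone : (1 : WaveFun d N).IndependentOf j := fun _ _ => rfl
    have hnorm : ‖(1 : WaveFun d N)‖ ^ 2 = 1 := by simp [WaveFun.norm_sq_eq_integral]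
    rw [← Complex.ofReal_inj, ← WaveFun.inner_pairPotential_mul_self hv.continuous]
    nth_rewrite 1 [← hone.avg_eq]
    rw [(WaveFun.isSymmetricProjection_avg j).isSymmetric, hv.avg_pairPotential_mul hij.ne hone,
      inner_smul_right, inner_self_eq_norm_sq_to_K]
    norm_cast
    rw [hnorm]
    exact mul_one _
  have hcount := sum_sum_eq_two_nsmul_sum_sum_lt_add (ι := Fin N) fun _ _ => Eq.refl (vhat 0)
  simp only [Finset.sum_const, Finset.card_univ, Fintype.card_fin, nsmul_eq_mul] at hcount
  push_cast at hcount
  rw [potentialEnergy, Finset.sum_congr rfl fun i _ => Finset.sum_congr rfl fun j _ =>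
    ite_congr rfl (hpair i j) fun _ => rfl]
  field_simp
  linarith

lemma E0_le (hN : 2 ≤ N) : E0 d N v ≤ N * vhat 0 / 2 := by
  refine csInf_le ⟨N / (2 * (N - 1)) * (N * vhat 0 - v 0), ?_⟩
    ⟨(1 : WaveFun d N), contDiff_const, fun _ _ => rfl, fun _ _ => rfl, ?_, ?_⟩
  · rintro _ ⟨Φ, hΦ, -, -, hnorm, rfl⟩
    set f := WaveFun.mk Φ hΦ.continuous
    have hkin : 0 ≤ kineticEnergy d N Φ := Finset.sum_nonneg fun i _ =>
      integral_nonneg fun x => Finset.sum_nonneg fun j _ => sq_nonneg _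
    have hpot : _ ≤ potentialEnergy d N v f :=
      (WaveFun.le_re_inner_mul (f := f) (hv.le_re_interaction hN)).trans_eq
        (WaveFun.potentialEnergy_eq_re_inner hv.continuous f).symm
    rw [WaveFun.norm_sq_eq_integral, show ∫ x in boxN d N, ‖f x‖ ^ 2 = 1 from hnorm,
      mul_one] at hpot
    exact hpot.trans (le_add_of_nonneg_left hkin)
  · simp [Normalized]
  · have hkin : kineticEnergy d N (1 : WaveFun d N) = 0 := by
      simp [kineticEnergy, show ⇑(1 : WaveFun d N) = fun _ => 1 from rfl]
    rw [energyForm, hkin, zero_add, hv.potentialEnergy_one hN]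

end PotentialAssumptions

end Potential

section Exchange

variable {d N : ℕ} {v : (Fin d → ℝ) → ℝ} {vhat : (Fin d → ℤ) → ℝ}

namespace WaveFun

lemma hasSum_inner_mul {ι : Type*} [Countable ι] {w : ι → WaveFun d N} {W : WaveFun d N}
    {c : ι → ℝ} (hc : Summable c) (hwc : ∀ k x, ‖w k x‖ ≤ c k)
    (hw : ∀ x, HasSum (fun k => w k x) (W x)) (f g : WaveFun d N) :
    HasSum (fun k => ⟪f, w k * g⟫_ℂ) ⟪f, W * g⟫_ℂ := by
  refine hasSum_integral_of_dominated_convergence (fun k x => c k * (‖f x‖ * ‖g x‖))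
    (fun k => (star f * (w k * g)).integrable.aestronglyMeasurable)
    (fun k => .of_forall fun x => ?_) (.of_forall fun x => hc.mul_right _) ?_
    (.of_forall fun x => ((hw x).mul_right _).mul_left _)
  · simp only [mul_apply, norm_mul, RCLike.norm_conj, mul_left_comm ‖f x‖]
    gcongr
    exact hwc k x
  · simp only [tsum_mul_right]
    exact integrable_boxN (by fun_prop)

/-- The plane wave of momentum `2πk` in the position of particle `i`. -/
def planeWaveAt (i : Fin N) (k : Fin d → ℤ) : WaveFun d N := mk fun x => _root_.planeWave k (x i)

lemma planeWaveAt_apply (i : Fin N) (k : Fin d → ℤ) (x : Fin N → Fin d → ℝ) :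
    planeWaveAt i k x = _root_.planeWave k (x i) := rfl

lemma inner_planeWaveAt_mul_swap (i j : Fin N) (k : Fin d → ℤ) (f : WaveFun d N) :
    ⟪f, planeWaveAt i k * star (planeWaveAt j k) * swap i j f⟫_ℂ =
      ⟪star (planeWaveAt i k) * f, swap i j (star (planeWaveAt i k) * f)⟫_ℂ := by
  rw [mul_assoc, inner_mul_right_eq]
  congr 1
  ext x
  simp only [mul_apply, star_apply, swap_apply, planeWaveAt_apply, Function.comp_apply,
    Equiv.swap_apply_left]

end WaveFun

namespace PotentialAssumptions

variable (hv : PotentialAssumptions d v vhat)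
include hv

open WaveFun

lemma re_inner_pairPotential_mul_swap_nonneg {i j : Fin N} (hij : i ≠ j) {f : WaveFun d N}
    (hf : f.IndependentOf j) :
    0 ≤ (⟪f, pairPotential hv.continuous i j * swap i j f⟫_ℂ).re := by
  have hsum := hasSum_inner_mul (W := pairPotential hv.continuous i j)
    (w := fun k => (vhat k : ℂ) • (planeWaveAt i k * star (planeWaveAt j k))) hv.summable
    (fun k x => by
      simp only [smul_apply, mul_apply, star_apply, planeWaveAt_apply, norm_mul, RCLike.norm_conj,
        norm_planeWave, Complex.norm_real, norm_of_nonneg (hv.nonneg k), mul_one, le_refl])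
    (fun x => by
      simpa only [smul_apply, mul_apply, star_apply, planeWaveAt_apply, pairPotential_apply,
        ← planeWave_sub] using hv.hasSum (x i - x j)) f (swap i j f)
  refine (Complex.hasSum_re hsum).nonneg fun k => ?_
  rw [smul_mul_assoc, inner_smul_right, Complex.re_ofReal_mul, inner_planeWaveAt_mul_swap]
  have hwave : (star (planeWaveAt i k)).IndependentOf j := fun x y => by
    simp only [star_apply, planeWaveAt_apply, Function.update_of_ne hij]
  exact mul_nonneg (hv.nonneg k) (hwave.mul hf).re_inner_swap_nonneg

lemma le_re_inner_pairPotential_mul (i j : Fin N) (f g : WaveFun d N) :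
    -(v 0 * (‖f‖ * ‖g‖)) ≤ (⟪f, pairPotential hv.continuous i j * g⟫_ℂ).re := by
  refine neg_le_of_abs_le ((Complex.abs_re_le_norm _).trans ((norm_inner_le_norm _ _).trans ?_))
  rw [mul_left_comm]
  gcongr
  exact norm_mul_le fun x => by simpa [pairPotential_apply] using hv.abs_le_apply_zero _

lemma le_re_inner_dev_pairPotential_mul_avg {i j : Fin N} (hij : i ≠ j) {f : WaveFun d N}
    (hf : SymmetricWF d N f) :
    -(v 0 * (‖dev i (dev j f)‖ * ‖f‖)) ≤
      (⟪dev i f, pairPotential hv.continuous i j * avg i f⟫_ℂ).re := by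
  set w := pairPotential (N := N) hv.continuous i j
  have hdev : dev i f = dev i (dev j f) + dev i (avg j f) := by rw [← map_add, dev_add_avg]
  have hswap : swap i j (dev i (avg j f)) = avg i (dev j f) := by
    rw [swap_dev, swap_avg, Equiv.swap_apply_left, Equiv.swap_apply_right, swap_eq_self hf]
    exact LinearMap.congr_fun ((Commute.one_left _).sub_left (commute_avg j i)).eq f
  have havg : avg i f = swap i j (dev i (avg j f)) + avg i (avg j f) := by
    rw [hswap, ← map_add, dev_add_avg]
  have hcomm : dev i (avg j f) = avg j (dev i f) :=
    LinearMap.congr_fun ((Commute.one_left _).sub_left (commute_avg i j)).eq f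
  have hcond : ⟪dev i (avg j f), w * avg i (avg j f)⟫_ℂ = 0 := by
    rw [hcomm, (isSymmetricProjection_avg j).isSymmetric,
      hv.avg_pairPotential_mul hij ((independentOf_avg j f).avg i), inner_smul_right,
      (independentOf_avg i _).inner_dev_left, mul_zero]
  have hexch : 0 ≤ (⟪dev i (avg j f), w * swap i j (dev i (avg j f))⟫_ℂ).re :=
    hv.re_inner_pairPotential_mul_swap_nonneg hij (hcomm ▸ independentOf_avg j _)
  have hpair := hv.le_re_inner_pairPotential_mul i j (dev i (dev j f)) (avg i f)
  have hle : v 0 * (‖dev i (dev j f)‖ * ‖avg i f‖) ≤ v 0 * (‖dev i (dev j f)‖ * ‖f‖) := by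
    have hv0 : 0 ≤ v 0 := (abs_nonneg _).trans (hv.abs_le_apply_zero 0)
    gcongr
    exact norm_symmetricProjection_apply_le (isSymmetricProjection_avg i) f
  have hsplit : ⟪dev i f, w * avg i f⟫_ℂ = ⟪dev i (dev j f), w * avg i f⟫_ℂ +
      ⟪dev i (avg j f), w * swap i j (dev i (avg j f))⟫_ℂ := by
    nth_rewrite 1 [hdev]
    rw [inner_add_left]
    congr 1
    nth_rewrite 1 [havg]
    rw [mul_add, inner_add_right, hcond, add_zero]
  rw [hsplit, Complex.add_re]
  linarith

lemma inner_dev_interaction_mul_avg (i : Fin N) (f : WaveFun d N) :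
    ⟪dev i f, interaction hv.continuous * avg i f⟫_ℂ = ((((N : ℝ) - 1)⁻¹ : ℝ) : ℂ) *
      ∑ j ∈ Finset.univ.erase i, ⟪dev i f, pairPotential hv.continuous i j * avg i f⟫_ℂ := by
  rw [inner_interaction_mul, sum_sum_lt_eq_sum_erase
    (fun a b => by rw [hv.pairPotential_comm]) i fun a b ha hb => ?_]
  exact ((independentOf_pairPotential _ ha hb).mul (independentOf_avg i f)).inner_dev_left f

lemma le_re_inner_dev_interaction_mul (hN : 2 ≤ N) {f : WaveFun d N} (hf : SymmetricWF d N f)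
    (i : Fin N) :
    N / (2 * (N - 1)) * (N * vhat 0 - v 0) * ‖dev i f‖ ^ 2 -
        v 0 * ((N - 1 : ℝ)⁻¹ * ∑ j ∈ Finset.univ.erase i, ‖dev i (dev j f)‖) * ‖f‖ ≤
      (⟪dev i f, interaction hv.continuous * f⟫_ℂ).re := by
  have hN1 : (0 : ℝ) < N - 1 := sub_pos.2 (Nat.one_lt_cast.2 hN)
  have hdiag := le_re_inner_mul (f := dev i f) (hv.le_re_interaction hN)
  have hoff : -(v 0 * ((N - 1 : ℝ)⁻¹ * ∑ j ∈ Finset.univ.erase i, ‖dev i (dev j f)‖) * ‖f‖) ≤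
      (⟪dev i f, interaction hv.continuous * avg i f⟫_ℂ).re := by
    rw [hv.inner_dev_interaction_mul_avg, Complex.re_ofReal_mul, Complex.re_sum]
    calc _ = (N - 1 : ℝ)⁻¹ *
          ∑ j ∈ Finset.univ.erase i, -(v 0 * (‖dev i (dev j f)‖ * ‖f‖)) := by
          rw [Finset.sum_neg_distrib, ← Finset.mul_sum, ← Finset.sum_mul]
          ring
      _ ≤ _ := by
          gcongr with j hj
          exact hv.le_re_inner_dev_pairPotential_mul_avg (Finset.ne_of_mem_erase hj).symm hf
  nth_rewrite 5 [← dev_add_avg i f]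
  rw [mul_add, inner_add_right, Complex.add_re]
  linarith

lemma le_re_inner_excitationNumber_interaction_mul (hN : 2 ≤ N) {f : WaveFun d N}
    (hf : SymmetricWF d N f) :
    N / (2 * (N - 1)) * (N * vhat 0 - v 0) * ∑ i, ‖dev i f‖ ^ 2 -
        v 0 * ‖excitationNumber f‖ * ‖f‖ ≤
      (⟪excitationNumber f, interaction hv.continuous * f⟫_ℂ).re := by
  have hN1 : (0 : ℝ) < N - 1 := sub_pos.2 (Nat.one_lt_cast.2 hN)
  have hv0 : 0 ≤ v 0 := (abs_nonneg _).trans (hv.abs_le_apply_zero 0)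
  have hpairs := sum_sum_erase_norm_symmetricProjection_le (𝕜 := ℂ)
    (isSymmetricProjection_dev (d := d) (N := N)) commute_dev f
  rw [Fintype.card_fin, Nat.cast_pred (by lia), ← excitationNumber_apply,
    ← inv_mul_le_iff₀ hN1] at hpairs
  rw [excitationNumber_apply f, sum_inner, Complex.re_sum, ← excitationNumber_apply]
  refine le_trans ?_ (Finset.sum_le_sum fun i _ => hv.le_re_inner_dev_interaction_mul hN hf i)
  rw [Finset.sum_sub_distrib, ← Finset.mul_sum, ← Finset.sum_mul, ← Finset.mul_sum,
    ← Finset.mul_sum]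
  gcongr

end PotentialAssumptions

end Exchange

section Localization

lemma re_inner_le_of_norm_add_sub_smul_le {𝕜 V : Type*} [RCLike 𝕜] [SeminormedAddCommGroup V]
    [InnerProductSpace 𝕜 V] {T W f : V} {c ε : ℝ} (h : ‖T + W - (c : 𝕜) • f‖ ≤ ε) (g : V) :
    RCLike.re ⟪g, T⟫_𝕜 ≤ ε * ‖g‖ + c * RCLike.re ⟪g, f⟫_𝕜 - RCLike.re ⟪g, W⟫_𝕜 := by
  have hres : RCLike.re ⟪g, T + W - (c : 𝕜) • f⟫_𝕜 ≤ ‖g‖ * ε :=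
    (re_inner_le_norm _ _).trans (by gcongr)
  rw [inner_sub_right, inner_add_right, inner_smul_right, map_sub, map_add,
    RCLike.re_ofReal_mul] at hres
  linarith

lemma mul_le_sq_add_of_mul_sq_le {c s b D Y : ℝ} (hc : 0 ≤ c) (hs : c * s ^ 2 ≤ Y)
    (hY : Y ≤ b * s + D) : c * Y ≤ b ^ 2 + 2 * (c * D) := by
  have hsq : (c * s) ^ 2 ≤ c * Y := by nlinarith
  have hcY : c * Y ≤ b * (c * s) + c * D := by nlinarith
  linarith [two_mul_le_add_sq b (c * s)]

variable {d N : ℕ} {v : (Fin d → ℝ) → ℝ} {vhat : (Fin d → ℤ) → ℝ} {μ E : ℝ}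

lemma sub_meanField_le (hN : 2 ≤ N) {a b : ℝ} (hE : E ≤ N * b / 2) :
    E - N / (2 * (N - 1)) * (N * b - a) ≤ N / (2 * (N - 1)) * (a - b) := by
  have hN1 : (N : ℝ) - 1 ≠ 0 := (sub_pos.2 (Nat.one_lt_cast.2 hN)).ne'
  have hsum : N / (2 * (N - 1)) * (N * b - a) + N / (2 * (N - 1)) * (a - b) = N * b / 2 := by
    field_simp
    ring
  linarith

lemma localization_const_le (hN : 2 ≤ N) {a b : ℝ} (hb : 0 ≤ b) (hab : b ≤ a) (hμ : 0 ≤ μ) :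
    (μ + N / (N - 1) * (a - b)) * (μ + N / (2 * (N - 1)) * (a - b)) ≤
      N / (2 * (N - 1)) * (μ + 3 * a + b) * (2 * μ + a - b) := by
  have hN2 : (2 : ℝ) ≤ N := Nat.ofNat_le_cast.2 hN
  set θ : ℝ := N / (2 * (N - 1)) with hθ
  have htwo : N / (N - 1 : ℝ) = 2 * θ := by
    rw [hθ]
    field_simp
  have hθ_ge : 1 / 2 ≤ θ := by
    rw [hθ, div_le_div_iff₀ two_pos (by linarith)]
    linarith
  have hθ_le : θ ≤ 1 := (div_le_one (by linarith)).2 (by linarith)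
  have hfst : μ + 2 * θ * (a - b) ≤ μ + 3 * a + b := by nlinarith
  have hsnd : μ + θ * (a - b) ≤ θ * (2 * μ + a - b) := by nlinarith
  calc (μ + N / (N - 1) * (a - b)) * (μ + θ * (a - b))
      = (μ + 2 * θ * (a - b)) * (μ + θ * (a - b)) := by rw [htwo]
    _ ≤ (μ + 3 * a + b) * (θ * (2 * μ + a - b)) :=
        mul_le_mul hfst hsnd (by nlinarith) (by linarith)
    _ = θ * (μ + 3 * a + b) * (2 * μ + a - b) := by ring

namespace PotentialAssumptions

open WaveFun

variable (hv : PotentialAssumptions d v vhat) (hN : 2 ≤ N) (hE : E ≤ N * vhat 0 / 2)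
  {f : WaveFun d N} (hf : ContDiff ℝ 2 f) (hnorm : ‖f‖ = 1)
  (hloc : ‖f.kinetic hf + interaction hv.continuous * f - ((E + μ / 2 : ℝ) : ℂ) • f‖ ≤ μ / 2)
include hN hE hnorm hloc

lemma sum_norm_dev_sq_le_of_localized (hp : PeriodicWF d N f) :
    (2 * π) ^ 2 * ∑ i, ‖dev i f‖ ^ 2 ≤ μ + N / (2 * (N - 1)) * (v 0 - vhat 0) := by
  have hkin := re_inner_le_of_norm_add_sub_smul_le (𝕜 := ℂ) (c := E + μ / 2) hloc f
  have hpot := le_re_inner_mul (f := f) (hv.le_re_interaction hN)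
  rw [inner_self_eq_norm_sq, hnorm] at hkin
  rw [hnorm] at hpot
  have hpoincare := poincare_kinetic hp hf
  have hgap := sub_meanField_le hN (a := v 0) hE
  simp only [RCLike.re_eq_complex_re] at hkin
  linarith

lemma re_inner_excitationNumber_kinetic_le_of_localized (hsym : SymmetricWF d N f) :
    (⟪excitationNumber f, f.kinetic hf⟫_ℂ).re ≤ (v 0 + μ / 2) * ‖excitationNumber f‖ +
      (μ / 2 + N / (2 * (N - 1)) * (v 0 - vhat 0)) * ∑ i, ‖dev i f‖ ^ 2 := by
  have hkin := re_inner_le_of_norm_add_sub_smul_le (𝕜 := ℂ) (c := E + μ / 2) hloc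
    (excitationNumber f)
  have hpot := hv.le_re_inner_excitationNumber_interaction_mul hN hsym
  rw [inner_excitationNumber_self] at hkin
  rw [hnorm] at hpot
  have hgap := mul_le_mul_of_nonneg_right (sub_meanField_le hN (a := v 0) hE)
    (Finset.sum_nonneg fun i (_ : i ∈ Finset.univ) => sq_nonneg ‖dev i f‖)
  simp only [RCLike.re_eq_complex_re, Complex.ofReal_re] at hkin
  linarith

lemma re_inner_excitationNumber_kinetic_le (hp : PeriodicWF d N f)
    (hsym : SymmetricWF d N f) :
    (2 * π) ^ 2 * (⟪excitationNumber f, f.kinetic hf⟫_ℂ).re ≤ (v 0 + μ / 2) ^ 2 +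
      (μ + N / (N - 1) * (v 0 - vhat 0)) * (μ + N / (2 * (N - 1)) * (v 0 - vhat 0)) := by
  have hN1 : (0 : ℝ) < N - 1 := sub_pos.2 (Nat.one_lt_cast.2 hN)
  have hμ : 0 ≤ μ / 2 := (norm_nonneg _).trans hloc
  have hΔ : 0 ≤ v 0 - vhat 0 := sub_nonneg.2 hv.vhat_zero_le
  have hnum := hv.sum_norm_dev_sq_le_of_localized hN hE hf hnorm hloc hp
  have hkin := hv.re_inner_excitationNumber_kinetic_le_of_localized hN hE hf hnorm hloc hsym
  calc _ ≤ (v 0 + μ / 2) ^ 2 + 2 * ((2 * π) ^ 2 *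
        ((μ / 2 + N / (2 * (N - 1)) * (v 0 - vhat 0)) * ∑ i, ‖dev i f‖ ^ 2)) :=
        mul_le_sq_add_of_mul_sq_le (sq_nonneg _) (poincare_excitationNumber_kinetic hp hf) hkin
    _ = (v 0 + μ / 2) ^ 2 + (μ + N / (N - 1) * (v 0 - vhat 0)) *
        ((2 * π) ^ 2 * ∑ i, ‖dev i f‖ ^ 2) := by
        field_simp
    _ ≤ _ := by
        have hfactor : 0 ≤ μ + N / (N - 1) * (v 0 - vhat 0) := by
          have := mul_nonneg (div_nonneg N.cast_nonneg hN1.le) hΔ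
          linarith
        gcongr

end PotentialAssumptions

end Localization

theorem statement6_general (d : ℕ) (v : (Fin d → ℝ) → ℝ) (vhat : (Fin d → ℤ) → ℝ)
    (hv : PotentialAssumptions d v vhat) (N : ℕ) (hN : 2 ≤ N) (μ E : ℝ)
    (hE : E ≤ N * vhat 0 / 2) (Ψ : (Fin N → Fin d → ℝ) → ℂ) (hΨ : ContDiff ℝ 2 Ψ)
    (hper : PeriodicWF d N Ψ) (hsym : SymmetricWF d N Ψ) (hnorm : Normalized d N Ψ)
    (hloc : Real.sqrt (∫ x in boxN d N,
        ‖HamOp d N v Ψ x - ((E + μ / 2 : ℝ) : ℂ) * Ψ x‖ ^ 2) ≤ μ / 2) :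
    (2 * π) ^ 2 * (∑ i : Fin N, ∑ j : Fin N, ∫ x in boxN d N, ∑ l : Fin d,
        fderiv ℝ (Qproj d N i Ψ) x (dir d N j l) *
          (starRingEnd ℂ) (fderiv ℝ Ψ x (dir d N j l))).re ≤
      (v 0 + μ / 2) ^ 2 + (μ + (N : ℝ) / ((N : ℝ) - 1) * (v 0 - vhat 0)) *
        (μ + (N : ℝ) / (2 * ((N : ℝ) - 1)) * (v 0 - vhat 0)) := by
  let f : WaveFun d N := .mk Ψ hΨ.continuous
  have hf : ‖f‖ = 1 :=
    (pow_eq_one_iff_of_nonneg (norm_nonneg f) two_ne_zero).1 (f.norm_sq_eq_integral.trans hnorm)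
  have hres : ‖f.kinetic hΨ + WaveFun.interaction hv.continuous * f -
      ((E + μ / 2 : ℝ) : ℂ) • f‖ ≤ μ / 2 := by
    rw [← Real.sqrt_sq (norm_nonneg _), WaveFun.norm_sq_eq_integral]
    convert hloc using 7 with x
    rw [show HamOp d N v Ψ = _ from WaveFun.hamOp_eq_kinetic_add hv.continuous f hΨ]
    rfl
  have hbound := hv.re_inner_excitationNumber_kinetic_le (f := f) hN hE hΨ hf hres hper hsym
  rwa [← inner_conj_symm, Complex.conj_re,
    WaveFun.inner_kinetic_excitationNumber (f := f) hper hΨ] at hbound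

theorem statement6 (d : ℕ) (hd : 1 ≤ d) (v : (Fin d → ℝ) → ℝ) (vhat : (Fin d → ℤ) → ℝ)
    (hv : PotentialAssumptions d v vhat) (N : ℕ) (hN : 2 ≤ N) (μ : ℝ) (hμ : 0 < μ)
    (Ψ : (Fin N → Fin d → ℝ) → ℂ) (hsmooth : ContDiff ℝ (⊤ : ℕ∞) Ψ)
    (hper : PeriodicWF d N Ψ) (hsym : SymmetricWF d N Ψ) (hnorm : Normalized d N Ψ)
    (hloc : Real.sqrt (∫ x in boxN d N,
        ‖HamOp d N v Ψ x - ((E0 d N v + μ / 2 : ℝ) : ℂ) * Ψ x‖ ^ 2) ≤ μ / 2) :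
    (2 * π) ^ 2 * (∑ i : Fin N, ∑ j : Fin N, ∫ x in boxN d N, ∑ l : Fin d,
        fderiv ℝ (Qproj d N i Ψ) x (dir d N j l) *
          (starRingEnd ℂ) (fderiv ℝ Ψ x (dir d N j l))).re ≤
      (v 0 + μ / 2) ^ 2 +
        (N : ℝ) / (2 * ((N : ℝ) - 1)) * (μ + 3 * v 0 + vhat 0) * (2 * μ + v 0 - vhat 0) := by
  have hbound := statement6_general d v vhat hv N hN μ _ (hv.E0_le hN) Ψ
    (hsmooth.of_le (WithTop.coe_le_coe.2 le_top)) hper hsym hnorm hloc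
  linarith [localization_const_le hN (hv.nonneg 0) hv.vhat_zero_le hμ.le]
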